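/- arXiv:1009.1226 — 6 statements merged into one kernel-verified Lean document; each statement's English description precedes it below -/
import Mathlib

section
/- There exist division rings D₁ and D₂, each finite-dimensional as a vector space over its center, whose centers are fields of characteristic zero, such that there is no division ring E, finite-dimensional over its center, admitting unital ring embeddings of both D₁ and D₂. (This answers Lance Small's question negatively: two finite-dimensional division algebras over fields of the same characteristic need not embed in a common finite-dimensional division algebra.) -/
/-- A division algebra: a division ring that is finite-dimensional as a vector space
over its center. -/
structure FinDimDivisionAlgebra : Type 1 where
  carrier : Type
  [divisionRing : DivisionRing carrier]
  [finiteDimensional : FiniteDimensional (Subring.center carrier) carrier]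

attribute [instance] FinDimDivisionAlgebra.divisionRing
attribute [instance] FinDimDivisionAlgebra.finiteDimensional

/-!
Take `D₁ = ℂ` and for `D₂` the quaternion algebra `(-1, 3)` over `ℚ`, which is a division ring
because `3` is not a sum of two rational squares. Suppose both embed in a division ring `E` of
finite dimension over its center `F`. Through `ℂ`, `E` contains a `2 ^ m`-th root of `3` for every
`m`, so the polynomials `X ^ 2 ^ m - 3` cannot all be irreducible over `F`, and this forces `3` or
`-3` to be a square in `F`. But `3 = j ^ 2` and `-3 = (3 i + j + k) ^ 2` are squares of noncentral
elements of `D₂`, whereas in `E` the only square roots of `b ^ 2` with `b` central are `± b`.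
-/

section SquareRoots

open Polynomial IntermediateField

variable {K L : Type*} [Field K] [Field L] [Algebra K L] {a : K} {x : L}

theorem isIntegral_of_minpoly_eq_X_sq_sub_C (hx : minpoly K x = X ^ 2 - C a) : IsIntegral K x :=
  minpoly.ne_zero_iff.1 (hx ▸ X_pow_sub_C_ne_zero two_pos a)

theorem norm_gen_of_minpoly_eq_X_sq_sub_C (hx : minpoly K x = X ^ 2 - C a) :
    Algebra.norm K (AdjoinSimple.gen K x) = -a := by
  have hint : IsIntegral K x := isIntegral_of_minpoly_eq_X_sq_sub_C hx
  rw [← adjoin.powerBasis_gen hint, Algebra.PowerBasis.norm_gen_eq_coeff_zero_minpoly]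
  simp [minpoly_gen, hx]

theorem norm_neg_gen_of_minpoly_eq_X_sq_sub_C (hx : minpoly K x = X ^ 2 - C a) :
    Algebra.norm K (-AdjoinSimple.gen K x) = -a := by
  have hrank : Module.finrank K K⟮x⟯ = 2 := by
    rw [adjoin.finrank (isIntegral_of_minpoly_eq_X_sq_sub_C hx), hx, natDegree_X_pow_sub_C]
  calc Algebra.norm K (-AdjoinSimple.gen K x)
      = Algebra.norm K (algebraMap K K⟮x⟯ (-1)) * Algebra.norm K (AdjoinSimple.gen K x) := by
        rw [← map_mul, map_neg (algebraMap K K⟮x⟯), map_one, neg_one_mul]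
    _ = -a := by
        rw [Algebra.norm_algebraMap, hrank, norm_gen_of_minpoly_eq_X_sq_sub_C hx, neg_one_sq,
          one_mul]

-- The hypotheses pass from `a` over `K` to `x = √a` over `K(x)`: both `x` and `-x` have norm `-a`,
-- which is not a square in `K`.
theorem X_pow_two_pow_sub_C_irreducible (ha : ¬IsSquare a) (hna : ¬IsSquare (-a)) (m : ℕ) :
    Irreducible (X ^ 2 ^ m - C a) := by
  induction m generalizing K a with
  | zero => simpa using irreducible_X_sub_C a
  | succ m ih =>
    rw [pow_succ]
    refine X_pow_mul_sub_C_irreducible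
      (X_pow_sub_C_irreducible_of_prime Nat.prime_two fun b hb ↦ ha ⟨b, by rw [← hb, sq]⟩) ?_
    intro L _ _ x hx
    refine ih (fun h ↦ hna ?_) (fun h ↦ hna ?_)
    · exact norm_gen_of_minpoly_eq_X_sq_sub_C hx ▸ h.map (Algebra.norm K)
    · exact norm_neg_gen_of_minpoly_eq_X_sq_sub_C hx ▸ h.map (Algebra.norm K)

theorem isSquare_or_isSquare_neg_of_forall_exists_pow_two_pow_eq {F A : Type*} [Field F] [Ring A]
    [Nontrivial A] [Algebra F A] [FiniteDimensional F A] {a : F}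
    (h : ∀ m : ℕ, ∃ x : A, x ^ 2 ^ m = algebraMap F A a) : IsSquare a ∨ IsSquare (-a) := by
  by_contra! ⟨ha, hna⟩
  set d := Module.finrank F A
  obtain ⟨x, hx⟩ := h d
  have hroot : aeval x (X ^ 2 ^ d - C a) = 0 := by simp [hx]
  have hminpoly : X ^ 2 ^ d - C a = minpoly F x :=
    minpoly.eq_of_irreducible_of_monic (X_pow_two_pow_sub_C_irreducible ha hna d) hroot
      (monic_X_pow_sub_C a (by positivity))
  have hdegree : 2 ^ d ≤ d :=
    calc 2 ^ d = (minpoly F x).natDegree := by rw [← hminpoly, natDegree_X_pow_sub_C]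
      _ ≤ d := minpoly.natDegree_le x
  exact hdegree.not_gt d.lt_two_pow_self

theorem mem_center_of_isSquare_of_sq_eq {F D E : Type*} [Field F] [Ring D] [Ring E]
    [NoZeroDivisors E] [Algebra F E] {g : D →+* E} (hg : Function.Injective g) {a : F}
    (ha : IsSquare a) {u : D} (hu : g u ^ 2 = algebraMap F E a) : u ∈ Subring.center D := by
  obtain ⟨b, rfl⟩ := ha
  have hgu : g u = algebraMap F E b ∨ g u = -algebraMap F E b := by
    rw [← (Algebra.commute_algebraMap_right b (g u)).sq_eq_sq_iff_eq_or_eq_neg, hu, map_mul, sq]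
  have hcomm (v : E) : Commute v (g u) := by
    have hb : Commute v (algebraMap F E b) := Algebra.commute_algebraMap_right b v
    rcases hgu with h | h <;> rw [h]
    exacts [hb, hb.neg_right]
  exact Subring.mem_center_iff.2 fun v ↦ hg <| by simpa only [map_mul] using (hcomm (g v)).eq

theorem mem_center_or_mem_center_of_sq_eq_intCast (F : Type*) {L D E : Type*} [Field F] [Field L]
    [IsAlgClosed L] [Ring D] [Ring E] [IsDomain E] [Algebra F E] [FiniteDimensional F E]
    (f : L →+* E) {g : D →+* E} (hg : Function.Injective g) {n : ℤ} {u v : D} (hu : u ^ 2 = n)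
    (hv : v ^ 2 = -n) : u ∈ Subring.center D ∨ v ∈ Subring.center D := by
  have hroots (m : ℕ) : ∃ x : E, x ^ 2 ^ m = algebraMap F E n := by
    obtain ⟨c, hc⟩ := IsAlgClosed.exists_pow_nat_eq (n : L) (n := 2 ^ m) (by positivity)
    exact ⟨f c, by rw [← map_pow, hc, map_intCast, map_intCast]⟩
  refine (isSquare_or_isSquare_neg_of_forall_exists_pow_two_pow_eq hroots).imp
    (mem_center_of_isSquare_of_sq_eq hg · ?_) (mem_center_of_isSquare_of_sq_eq hg · ?_)
  · rw [← map_pow, hu, map_intCast, map_intCast]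
  · rw [← map_pow, hv, map_neg, map_neg, map_intCast, map_intCast]

end SquareRoots

section SumsOfTwoSquares

theorem eq_sq_add_sq_of_mul_sq_eq {n d : ℕ} (hd : d ≠ 0)
    (h : ∃ x y : ℕ, n * d ^ 2 = x ^ 2 + y ^ 2) : ∃ x y : ℕ, n = x ^ 2 + y ^ 2 := by
  refine Nat.eq_sq_add_sq_iff.2 fun q hq hq4 ↦ ?_
  have : Fact q.Prime := ⟨Nat.prime_of_mem_primeFactors hq⟩
  have hn : n ≠ 0 := (Nat.mem_primeFactors.1 hq).2.2
  have hd2 : d ^ 2 ≠ 0 := pow_ne_zero 2 hd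
  have hq' : q ∈ (n * d ^ 2).primeFactors := by
    rw [Nat.primeFactors_mul hn hd2]
    exact Finset.mem_union_left _ hq
  have heven : Even (padicValNat q (n * d ^ 2)) := Nat.eq_sq_add_sq_iff.1 h q hq' hq4
  rw [padicValNat.mul hn hd2, padicValNat.pow, Nat.even_add] at heven
  exact heven.2 (even_two_mul _)

theorem exists_nat_eq_sq_add_sq_of_rat {n : ℕ} {s t : ℚ} (h : s ^ 2 + t ^ 2 = n) :
    ∃ x y : ℕ, n = x ^ 2 + y ^ 2 := by
  refine eq_sq_add_sq_of_mul_sq_eq (mul_ne_zero s.den_ne_zero t.den_ne_zero)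
    ⟨(s.num * t.den).natAbs, (t.num * s.den).natAbs, ?_⟩
  zify
  rw [sq_abs, sq_abs]
  have hs : (s.num : ℚ) = s * s.den := (Rat.mul_den_eq_num s).symm
  have ht : (t.num : ℚ) = t * t.den := (Rat.mul_den_eq_num t).symm
  qify
  rw [hs, ht, ← h]
  ring

theorem rat_sq_add_sq_ne_three (s t : ℚ) : s ^ 2 + t ^ 2 ≠ 3 := by
  intro h
  obtain ⟨x, y, hxy⟩ := exists_nat_eq_sq_add_sq_of_rat (n := 3) (mod_cast h)
  have hx : x < 2 := by nlinarith
  have hy : y < 2 := by nlinarith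
  interval_cases x <;> interval_cases y <;> omega

variable {K : Type*} [Field K]

theorem eq_zero_of_sq_add_sq_eq_zero (hneg : ¬IsSquare (-1 : K)) {x y : K}
    (h : x ^ 2 + y ^ 2 = 0) : x = 0 ∧ y = 0 := by
  have hy : y = 0 := by
    by_contra hy
    refine hneg ⟨x / y, ?_⟩
    field_simp
    linear_combination -h
  subst hy
  simpa using h

-- The nonzero values of `z ^ 2 + w ^ 2` form a group, so a nontrivial solution would write `b` as
-- a sum of two squares.
theorem eq_zero_of_sq_add_sq_eq_mul {b : K} (hneg : ¬IsSquare (-1 : K))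
    (hb : ∀ s t : K, s ^ 2 + t ^ 2 ≠ b) {x y z w : K}
    (h : x ^ 2 + y ^ 2 = b * (z ^ 2 + w ^ 2)) : x = 0 ∧ y = 0 ∧ z = 0 ∧ w = 0 := by
  have hzw : z ^ 2 + w ^ 2 = 0 := by
    by_contra hzw
    refine hb ((x * z + y * w) / (z ^ 2 + w ^ 2)) ((x * w - y * z) / (z ^ 2 + w ^ 2)) ?_
    field_simp
    linear_combination (z ^ 2 + w ^ 2) * h
  obtain ⟨hz, hw⟩ := eq_zero_of_sq_add_sq_eq_zero hneg hzw
  obtain ⟨hx, hy⟩ := eq_zero_of_sq_add_sq_eq_zero hneg (by rw [h, hzw, mul_zero])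
  exact ⟨hx, hy, hz, hw⟩

end SumsOfTwoSquares

open scoped Quaternion

theorem quaternionAlgebra_re_mul_star {R : Type*} [CommRing R] {c₁ c₃ : R} (x : ℍ[R,c₁,c₃]) :
    (x * star x).re = x.re ^ 2 - c₁ * x.imI ^ 2 - c₃ * x.imJ ^ 2 + c₁ * c₃ * x.imK ^ 2 := by
  simp only [QuaternionAlgebra.re_mul, QuaternionAlgebra.re_star, QuaternionAlgebra.imI_star,
    QuaternionAlgebra.imJ_star, QuaternionAlgebra.imK_star]
  ring

theorem quaternionAlgebra_sq_of_re_eq_zero {R : Type*} [CommRing R] {c₁ c₃ : R} (x y z : R) :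
    (⟨0, x, y, z⟩ : ℍ[R,c₁,c₃]) ^ 2 =
      ((c₁ * x ^ 2 + c₃ * y ^ 2 - c₁ * c₃ * z ^ 2 : R) : ℍ[R,c₁,c₃]) := by
  rw [sq, QuaternionAlgebra.mk_mul_mk, QuaternionAlgebra.coe]
  congr 1 <;> ring

theorem imJ_eq_zero_of_mem_center {R : Type*} [CommRing R] [NoZeroDivisors R] [NeZero (2 : R)]
    {c₁ c₃ : R} {x : ℍ[R,c₁,c₃]} (hx : x ∈ Subring.center ℍ[R,c₁,c₃]) : x.imJ = 0 := by
  have hcomm : (⟨0, 1, 0, 0⟩ * x : ℍ[R,c₁,c₃]) = x * ⟨0, 1, 0, 0⟩ :=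
    Subring.mem_center_iff.1 hx _
  have himK : x.imJ = -x.imJ := by simpa using congrArg QuaternionAlgebra.imK hcomm
  have htwo : 2 * x.imJ = 0 := by linear_combination himK
  exact (mul_eq_zero.1 htwo).resolve_left two_ne_zero

theorem isUnit_of_re_mul_star_ne_zero {K : Type*} [Field K] {c₁ c₂ c₃ : K} {x : ℍ[K,c₁,c₂,c₃]}
    (hx : (x * star x).re ≠ 0) : IsUnit x := by
  have hunit : IsUnit (x * star x) := by
    rw [QuaternionAlgebra.mul_star_eq_coe]
    exact hx.isUnit.map (algebraMap K ℍ[K,c₁,c₂,c₃])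
  exact ((star_comm_self (x := x)).symm.isUnit_mul_iff.1 hunit).1

theorem quaternionAlgebra_isUnit_or_eq_zero {K : Type*} [Field K] {b : K}
    (hneg : ¬IsSquare (-1 : K)) (hb : ∀ s t : K, s ^ 2 + t ^ 2 ≠ b) (x : ℍ[K,-1,b]) :
    IsUnit x ∨ x = 0 := by
  rw [or_iff_not_imp_right]
  refine fun hx ↦ isUnit_of_re_mul_star_ne_zero fun hnorm ↦ hx ?_
  rw [quaternionAlgebra_re_mul_star] at hnorm
  obtain ⟨hre, hI, hJ, hK⟩ := eq_zero_of_sq_add_sq_eq_mul hneg hb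
    (show x.re ^ 2 + x.imI ^ 2 = b * (x.imJ ^ 2 + x.imK ^ 2) by linear_combination hnorm)
  exact QuaternionAlgebra.ext hre hI hJ hK

/-- The division ring structure on the quaternion algebra `(-1, b)` over a field in which `-1` is
not a square and `b` is not a sum of two squares, extending the ring structure of
`QuaternionAlgebra`. -/
noncomputable abbrev quaternionAlgebraDivisionRing {K : Type*} [Field K] {b : K}
    (hneg : ¬IsSquare (-1 : K)) (hb : ∀ s t : K, s ^ 2 + t ^ 2 ≠ b) : DivisionRing ℍ[K,-1,b] :=
  .ofIsUnitOrEqZero (quaternionAlgebra_isUnit_or_eq_zero hneg hb)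

theorem module_finite_center (R A : Type*) [CommRing R] [Ring A] [Algebra R A]
    [Module.Finite R A] : Module.Finite (Subring.center A) A :=
  Module.Finite.of_restrictScalars_finite R (Subalgebra.center R A) A

/-- There exist division rings `D₁` and `D₂`, each finite-dimensional over its center,
whose centers are fields of characteristic zero, such that no division ring `E`,
finite-dimensional over its center, admits unital ring embeddings of both `D₁` and `D₂`. -/
theorem small_question_has_negative_answer :
    ∃ D₁ D₂ : FinDimDivisionAlgebra,
      CharZero (Subring.center D₁.carrier) ∧
      CharZero (Subring.center D₂.carrier) ∧
      ¬ ∃ (E : FinDimDivisionAlgebra) (f₁ : D₁.carrier →+* E.carrier)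
          (f₂ : D₂.carrier →+* E.carrier),
          Function.Injective f₁ ∧ Function.Injective f₂ := by
  have hneg : ¬IsSquare (-1 : ℚ) := fun h ↦ by linarith [h.nonneg]
  let : DivisionRing ℍ[ℚ,-1,3] := quaternionAlgebraDivisionRing hneg rat_sq_add_sq_ne_three
  have : FiniteDimensional (Subring.center ℂ) ℂ := module_finite_center ℂ ℂ
  have : FiniteDimensional (Subring.center ℍ[ℚ,-1,3]) ℍ[ℚ,-1,3] := module_finite_center ℚ _
  have : CharZero ℍ[ℚ,-1,3] := algebraRat.charZero _
  refine ⟨⟨ℂ⟩, ⟨ℍ[ℚ,-1,3]⟩, inferInstanceAs (CharZero (Subring.center ℂ)),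
    inferInstanceAs (CharZero (Subring.center ℍ[ℚ,-1,3])), ?_⟩
  rintro ⟨E, f₁, f₂, -, hf₂⟩
  have hu : (⟨0, 0, 1, 0⟩ : ℍ[ℚ,-1,3]) ^ 2 = (3 : ℤ) := by
    rw [quaternionAlgebra_sq_of_re_eq_zero, ← QuaternionAlgebra.coe_intCast]
    norm_num
  have hv : (⟨0, 3, 1, 1⟩ : ℍ[ℚ,-1,3]) ^ 2 = -(3 : ℤ) := by
    rw [quaternionAlgebra_sq_of_re_eq_zero, ← QuaternionAlgebra.coe_intCast,
      ← QuaternionAlgebra.coe_neg]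
    norm_num
  rcases mem_center_or_mem_center_of_sq_eq_intCast (Subring.center E.carrier) f₁ hf₂ hu hv
    with h | h <;> exact one_ne_zero (imJ_eq_zero_of_mem_center h)
end

section
/- Let p be a prime, let Ω be a field of characteristic zero, and let L and K be intermediate fields of Ω/ℚ such that L/ℚ is a Galois extension whose Galois group (with the Krull topology) is isomorphic as a topological group to the additive group of the p-adic integers ℤ_p. If the compositum L⊔K (the subfield of Ω generated by L and K) is finite-dimensional over K, then L ⊆ K. -/
/-!
Every element of `Gal(LK/K)` has finite order because `LK/K` is finite, and restricting it to `L`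
gives an element of finite order of the torsion-free group `Gal(L/ℚ)`, hence the identity. So `L`
lies in the fixed field of `Gal(LK/K)`, and this is `K` because `LK/K` is again Galois.
-/

open IntermediateField

section BaseChange

variable {F K E : Type*} [Field F] [Field K] [Field E] [Algebra F K] [Algebra F E] [Algebra K E]

theorem normal_adjoin_of_splits {S : Set E}
    (hS : ∀ x ∈ S, IsIntegral K x ∧ ((minpoly K x).map (algebraMap K (adjoin K S))).Splits) :
    Normal K (adjoin K S) := by
  have : Algebra.IsAlgebraic K (adjoin K S) := isAlgebraic_adjoin fun x hx ↦ (hS x hx).1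
  refine normal_iff.2 fun x ↦ ⟨Algebra.IsIntegral.isIntegral x, ?_⟩
  rw [minpoly_eq]
  exact splits_of_mem_adjoin K E hS x.2

variable [IsScalarTower F K E]

theorem le_restrictScalars_adjoin_coe (L : IntermediateField F E) :
    L ≤ (adjoin K (L : Set E)).restrictScalars F :=
  subset_adjoin K (L : Set E)

theorem splits_minpoly_map_adjoin_of_mem {L : IntermediateField F E} [Normal F L] {x : E}
    (hx : x ∈ L) :
    ((minpoly K x).map (algebraMap K (adjoin K (L : Set E)))).Splits := by
  have hxF : IsIntegral F x := (Normal.isIntegral ‹_› (⟨x, hx⟩ : L)).map L.val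
  have hsplits : ((minpoly F x).map (algebraMap F (adjoin K (L : Set E)))).Splits := by
    have hsplitsL := Normal.splits ‹_› (⟨x, hx⟩ : L)
    rw [minpoly_eq] at hsplitsL
    exact hsplitsL.of_algHom (inclusion (le_restrictScalars_adjoin_coe (K := K) L))
  refine hsplits.of_dvd (Polynomial.map_ne_zero (minpoly.ne_zero hxF)) ?_
  rw [IsScalarTower.algebraMap_eq F K, ← Polynomial.map_map]
  exact Polynomial.map_dvd _ (minpoly.dvd_map_of_isScalarTower F K x)

theorem isGalois_adjoin_coe (L : IntermediateField F E) [IsGalois F L] :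
    IsGalois K (adjoin K (L : Set E)) := by
  have hsep (x : E) (hx : x ∈ L) : IsSeparable K x :=
    ((IsGalois.separable F (⟨x, hx⟩ : L)).map L.val L.val.injective).tower_top K
  have : Algebra.IsSeparable K (adjoin K (L : Set E)) :=
    (isSeparable_adjoin_iff_isSeparable K E).2 hsep
  have : Normal K (adjoin K (L : Set E)) := normal_adjoin_of_splits fun x hx ↦
    ⟨(hsep x hx).isIntegral, splits_minpoly_map_adjoin_of_mem hx⟩
  exact ⟨⟩

end BaseChange

theorem algebraMap_mem_range_of_torsionFree_galoisGroup {F L K M : Type*}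
    [Field F] [Field L] [Field K] [Field M] [Algebra F L] [Algebra F K] [Algebra F M]
    [Algebra L M] [Algebra K M] [IsScalarTower F L M] [IsScalarTower F K M]
    [Normal F L] [IsGalois K M] [FiniteDimensional K M]
    (htors : ∀ g : Gal(L/F), IsOfFinOrder g → g = 1) (x : L) :
    algebraMap L M x ∈ Set.range (algebraMap K M) := by
  refine (IsGalois.mem_range_algebraMap_iff_fixed _).2 fun σ ↦ ?_
  have hσ : restrictRestrictAlgEquivMapHom F L K M σ = 1 :=
    htors _ (MonoidHom.isOfFinOrder _ (isOfFinOrder_of_finite σ))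
  calc σ (algebraMap L M x)
    _ = algebraMap L M (restrictRestrictAlgEquivMapHom F L K M σ x) :=
      (AlgEquiv.restrictNormal_commutes (σ.restrictScalars F) L x).symm
    _ = algebraMap L M x := by rw [hσ, AlgEquiv.one_apply]

theorem le_of_compositum_finiteDimensional_of_galoisGroup_padic_general
    {F E : Type*} [Field F] [Field E] [Algebra F E] (L K : IntermediateField F E)
    [hL : IsGalois F L] (htors : ∀ g : Gal(L/F), IsOfFinOrder g → g = 1)
    (hfin : FiniteDimensional K (adjoin K (L : Set E))) :
    L ≤ K := by
  intro x hx
  let ι := inclusion (le_restrictScalars_adjoin_coe (K := K) L)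
  let : Algebra L (adjoin K (L : Set E)) := ι.toAlgebra
  have : IsScalarTower F L (adjoin K (L : Set E)) := .of_algHom ι
  have := isGalois_adjoin_coe (K := K) L
  obtain ⟨k, hk⟩ := algebraMap_mem_range_of_torsionFree_galoisGroup (K := K)
    (M := adjoin K (L : Set E)) htors ⟨x, hx⟩
  have hkx : (k : E) = x := congrArg Subtype.val hk
  exact hkx ▸ k.2

/-- Let `p` be a prime, `Ω` a field of characteristic zero, and `L`, `K` intermediate
fields of `Ω/ℚ` with `L/ℚ` Galois whose Galois group (with the Krull topology) is
isomorphic as a topological group to the additive group `ℤ_p` of `p`-adic integers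
(formulated multiplicatively via `Multiplicative ℤ_[p]`).  If the compositum of `L`
and `K` (the intermediate field of `Ω/K` generated by `L`) is finite-dimensional over
`K`, then `L ⊆ K`. -/
theorem le_of_compositum_finiteDimensional_of_galoisGroup_padic
    (p : ℕ) [Fact p.Prime] (Ω : Type) [Field Ω] [CharZero Ω]
    (L K : IntermediateField ℚ Ω) [IsGalois ℚ L]
    (e : (L ≃ₐ[ℚ] L) ≃ₜ Multiplicative ℤ_[p])
    (he : ∀ x y : (L ≃ₐ[ℚ] L), e (x * y) = e x * e y)
    (hfin : FiniteDimensional K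
      (IntermediateField.adjoin K ((L : IntermediateField ℚ Ω) : Set Ω))) :
    L ≤ K :=
  -- `IsGalois ℚ L` refers to the `ℚ`-algebra structure of `L` as a field of characteristic zero,
  -- which instance search does not identify with the one `L` has as an intermediate field.
  le_of_compositum_finiteDimensional_of_galoisGroup_padic_general L K (hL := ‹IsGalois ℚ L›)
    (fun _ hg ↦ (map_eq_one_iff (MonoidHom.mk' e he) e.injective).1
      ((MonoidHom.mk' e he).isOfFinOrder hg).eq_one') hfin
end

section
/- Let p₁ and p₂ be distinct primes. Let D be a central division algebra over ℚ of degree p₁ (i.e., a division ring with center ℚ and dim_ℚ D = p₁²). Let F₁/ℚ be an algebraic field extension such that every intermediate field of F₁/ℚ that is finite-dimensional over ℚ has degree a power of p₂. Then the tensor product D ⊗_ℚ F₁ is a division ring. -/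
/-!
A nonzero left ideal of `D ⊗ M` is a vector space over both division rings `D` and `M`, so its
dimension over the base field is divisible by both their dimensions. When `D` and `M` are
finite-dimensional of coprime dimensions it is therefore everything, and `D ⊗ M` is a division ring.
For `F` algebraic, an element of `D ⊗ F` already lives in `D ⊗ M` for a finite subextension `M`,
where it is invertible.
-/

open scoped TensorProduct

open Module

section

variable {K : Type*} [Field K]

theorem finrank_dvd_finrank_of_algHom {D A V : Type*} [DivisionRing D] [Algebra K D]
    [Semiring A] [Algebra K A] [AddCommGroup V] [Module K V] [Module A V] [IsScalarTower K A V]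
    (f : D →ₐ[K] A) : finrank K D ∣ finrank K V := by
  let _ : Module D V := Module.compHom V f.toRingHom
  have : IsScalarTower K D V := ⟨fun c d v => by
    change f (c • d) • v = c • f d • v
    rw [map_smul, smul_assoc]⟩
  exact ⟨finrank D V, (finrank_mul_finrank K D V).symm⟩

theorem isSimpleModule_tensorProduct_self_of_coprime_finrank (D E : Type*)
    [DivisionRing D] [Algebra K D] [FiniteDimensional K D]
    [DivisionRing E] [Algebra K E] [FiniteDimensional K E]
    (hcoprime : (finrank K D).Coprime (finrank K E)) :
    IsSimpleModule (D ⊗[K] E) (D ⊗[K] E) := by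
  refine (isSimpleModule_iff _ _).mpr ⟨fun I => or_iff_not_imp_left.mpr fun hI => ?_⟩
  have hdvd : finrank K (D ⊗[K] E) ∣ finrank K I := by
    rw [finrank_tensorProduct]
    exact hcoprime.mul_dvd_of_dvd_of_dvd
      (finrank_dvd_finrank_of_algHom (Algebra.TensorProduct.includeLeft : D →ₐ[K] D ⊗[K] E))
      (finrank_dvd_finrank_of_algHom (Algebra.TensorProduct.includeRight : E →ₐ[K] D ⊗[K] E))
  have hpos : 0 < finrank K (I.restrictScalars K) :=
    Submodule.one_le_finrank_iff.mpr (by simpa using hI)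
  have htop : I.restrictScalars K = ⊤ :=
    Submodule.eq_top_of_finrank_eq ((Submodule.finrank_le _).antisymm (Nat.le_of_dvd hpos hdvd))
  exact (Submodule.restrictScalars_eq_top_iff K _ _).mp htop

theorem exists_finiteDimensional_mem_range_lTensor {V F : Type*}
    [AddCommMonoid V] [Module K V] [Field F] [Algebra K F] [Algebra.IsAlgebraic K F]
    (x : V ⊗[K] F) :
    ∃ M : IntermediateField K F, FiniteDimensional K M ∧
      x ∈ LinearMap.range (M.val.toLinearMap.lTensor V) := by
  induction x using TensorProduct.induction_on with
  | zero => exact ⟨⊥, inferInstance, zero_mem _⟩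
  | tmul v a =>
    exact ⟨IntermediateField.adjoin K {a},
      IntermediateField.adjoin.finiteDimensional (Algebra.IsIntegral.isIntegral a),
      v ⊗ₜ IntermediateField.AdjoinSimple.gen K a, by simp⟩
  | add x y hx hy =>
    obtain ⟨M, _, hxM⟩ := hx
    obtain ⟨N, _, hyN⟩ := hy
    have range_mono {L : IntermediateField K F} (hL : L ≤ M ⊔ N) :
        LinearMap.range (L.val.toLinearMap.lTensor V) ≤
          LinearMap.range ((M ⊔ N).val.toLinearMap.lTensor V) := by
      have hcomp : L.val.toLinearMap =
          (M ⊔ N).val.toLinearMap ∘ₗ (IntermediateField.inclusion hL).toLinearMap := rfl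
      rw [hcomp, LinearMap.lTensor_comp]
      exact LinearMap.range_comp_le_range _ _
    exact ⟨M ⊔ N, inferInstance,
      add_mem (range_mono le_sup_left hxM) (range_mono le_sup_right hyN)⟩

theorem tensor_isDivisionRing_of_coprime_tower_general {D F : Type*}
    [DivisionRing D] [Algebra K D] [FiniteDimensional K D]
    [Field F] [Algebra K F] [Algebra.IsAlgebraic K F]
    (hcoprime : ∀ M : IntermediateField K F, FiniteDimensional K M →
      (finrank K D).Coprime (finrank K M)) :
    Nontrivial (D ⊗[K] F) ∧ ∀ x : D ⊗[K] F, x ≠ 0 → IsUnit x := by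
  refine ⟨inferInstance, fun x hx => ?_⟩
  obtain ⟨M, hM, y, rfl⟩ := exists_finiteDimensional_mem_range_lTensor x
  have hy : y ≠ 0 := by
    rintro rfl
    exact hx (map_zero _)
  have hsimple := isSimpleModule_tensorProduct_self_of_coprime_finrank D M (hcoprime M hM)
  have hunit : IsUnit y := (isSimpleModule_self_iff_isUnit.mp hsimple).2 y hy
  exact hunit.map (Algebra.TensorProduct.map (AlgHom.id K D) M.val)

end

/-- Let `p₁ ≠ p₂` be primes, `D` a central division algebra over `ℚ` of degree `p₁`
(a division ring with center `ℚ` and `dim_ℚ D = p₁²`), and `F₁/ℚ` an algebraic field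
extension all of whose finite-dimensional intermediate fields have degree a power of
`p₂` over `ℚ`.  Then `D ⊗_ℚ F₁` is a division ring (it is nontrivial and every nonzero
element is a unit). -/
theorem tensor_isDivisionRing_of_coprime_tower
    (p₁ p₂ : ℕ) (hp₁ : p₁.Prime) (hp₂ : p₂.Prime) (hne : p₁ ≠ p₂)
    (D : Type) [DivisionRing D] [Algebra ℚ D]
    (hDcentral : Subalgebra.center ℚ D = ⊥)
    (hDdeg : Module.finrank ℚ D = p₁ ^ 2)
    (F₁ : Type) [Field F₁] [Algebra ℚ F₁] [Algebra.IsAlgebraic ℚ F₁]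
    (hF₁ : ∀ M : IntermediateField ℚ F₁, FiniteDimensional ℚ M →
      ∃ n : ℕ, Module.finrank ℚ M = p₂ ^ n) :
    Nontrivial (D ⊗[ℚ] F₁) ∧ ∀ x : D ⊗[ℚ] F₁, x ≠ 0 → IsUnit x := by
  have : FiniteDimensional ℚ D := .of_finrank_pos (hDdeg ▸ pow_pos hp₁.pos 2)
  refine tensor_isDivisionRing_of_coprime_tower_general fun M hM => ?_
  obtain ⟨n, hn⟩ := hF₁ M hM
  exact hDdeg ▸ hn ▸ Nat.coprime_pow_primes 2 n hp₁ hp₂ hne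
end

section
/- Let p be a prime and let L/ℚ be a Galois field extension that is cyclic of degree p (i.e., [L:ℚ] = p and Gal(L/ℚ) is cyclic of order p). Then there exists a central division algebra D over ℚ of degree p (a division ring with center ℚ and dim_ℚ D = p²) together with a ℚ-algebra embedding of L into D; the image of L is a maximal subfield of D. -/
/-- A `ℚ`-division algebra: a division ring equipped with a `ℚ`-algebra structure. -/
structure DivisionAlgebraOverQ : Type 1 where
  carrier : Type
  [divisionRing : DivisionRing carrier]
  [algebra : Algebra ℚ carrier]

attribute [instance] DivisionAlgebraOverQ.divisionRing
attribute [instance] DivisionAlgebraOverQ.algebra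

/-!
Let `σ` generate the Galois group. A rational prime `q` that stays prime in `L` makes the cyclic
algebra `(L/ℚ, σ, q) = ⨁ i < p, L uⁱ`, with `u x = σ(x) u` and `uᵖ = q`, a division algebra. Indeed
the `q`-adic valuation `v` of `L` is `σ`-invariant and `v(q)ⁱ` is not a `p`-th power of a value for
`0 < i < p`, so the nonzero terms `xᵢ uⁱ` of an element have distinct values once `u` is given the
value `v(q)^(1/p)`. Hence every nonzero element has a dominant term, the product of the dominant
terms of two elements dominates all other terms of their product, and there are no zero divisors.

Such a `q` exists without recourse to density theorems. As `[L : ℚ]` is prime, an unramified `q`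
that is not inert splits completely, so that at least two ideals have norm `q`. If this happened for
all unramified `q`, extending two such choices multiplicatively would produce, for all `m` and `n`
prime to the discriminant, coprime ideals of norms `m` and `n`, with different products for
different pairs `(m, n)`. This gives at least `c s log s` ideals of norm at most `s`, whereas the
number of all such ideals grows linearly.
-/

section MultiplicativeLift

variable {M : Type*}

/-- The completely multiplicative function on the positive integers taking the value `f q` at each
prime `q`, and the junk value `1` at `0`. It turns a choice of an ideal of norm `q` for each prime
`q` into a choice of an ideal of norm `m` for each `m`. -/
def multiplicativeLift [CommMonoid M] (f : ℕ → M) (m : ℕ) : M :=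
  m.factorization.prod fun q k => f q ^ k

lemma map_multiplicativeLift [CommMonoid M] (ν : M →* ℕ) {f : ℕ → M} {m : ℕ} (hm : m ≠ 0)
    (hf : ∀ q ∈ m.primeFactors, ν (f q) = q) : ν (multiplicativeLift f m) = m := by
  calc ν (multiplicativeLift f m) = m.factorization.prod fun q k => ν (f q) ^ k := by
        simp only [multiplicativeLift, map_finsuppProd, map_pow]
    _ = m.factorization.prod (· ^ ·) := Finsupp.prod_congr fun q hq => by
        rw [hf q (Nat.support_factorization m ▸ hq)]
    _ = m := Nat.prod_factorization_pow_eq_self hm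

lemma isCoprime_multiplicativeLift [CommSemiring M] {f g : ℕ → M} {m n : ℕ}
    (h : ∀ q ∈ m.primeFactors, ∀ r ∈ n.primeFactors, IsCoprime (f q) (g r)) :
    IsCoprime (multiplicativeLift f m) (multiplicativeLift g n) :=
  IsCoprime.prod_left fun q hq => IsCoprime.prod_right fun r hr => (h q hq r hr).pow

lemma multiplicativeLift_mul_injOn [CommSemiring M] (ν : M →* ℕ) {f g : ℕ → M} {S : Set ℕ}
    (hf : ∀ q ∈ S, ν (f q) = q) (hg : ∀ q ∈ S, ν (g q) = q)
    (hfg : ∀ q ∈ S, ∀ r ∈ S, IsCoprime (f q) (g r)) :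
    Set.InjOn (fun z : ℕ × ℕ => multiplicativeLift f z.1 * multiplicativeLift g z.2)
      ({m | m ≠ 0 ∧ ∀ q ∈ m.primeFactors, q ∈ S} ×ˢ {m | m ≠ 0 ∧ ∀ q ∈ m.primeFactors, q ∈ S}) := by
  have dvd_of_eq : ∀ {m n m' n' : ℕ}, m ≠ 0 → m' ≠ 0 → (∀ q ∈ m.primeFactors, q ∈ S) →
      (∀ q ∈ m'.primeFactors, q ∈ S) → (∀ q ∈ n'.primeFactors, q ∈ S) →
      multiplicativeLift f m * multiplicativeLift g n =
        multiplicativeLift f m' * multiplicativeLift g n' → m ∣ m' := by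
    intro m n m' n' hm hm' hmS hmS' hnS' heq
    have hdvd : multiplicativeLift f m ∣ multiplicativeLift f m' :=
      (isCoprime_multiplicativeLift fun q hq r hr =>
        hfg q (hmS _ hq) r (hnS' _ hr)).dvd_of_dvd_mul_right (Dvd.intro _ heq)
    simpa only [map_multiplicativeLift ν hm fun q hq => hf q (hmS _ hq),
      map_multiplicativeLift ν hm' fun q hq => hf q (hmS' _ hq)] using map_dvd ν hdvd
  rintro ⟨m, n⟩ ⟨⟨hm, hmS⟩, hn, hnS⟩ ⟨m', n'⟩ ⟨⟨hm', hmS'⟩, hn', hnS'⟩ heq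
  obtain rfl : m = m' :=
    Nat.dvd_antisymm (dvd_of_eq hm hm' hmS hmS' hnS' heq) (dvd_of_eq hm' hm hmS' hmS hnS heq.symm)
  have hν := congrArg ν heq
  simp only [map_mul, map_multiplicativeLift ν hm fun q hq => hf q (hmS _ hq),
    map_multiplicativeLift ν hn fun q hq => hg q (hnS _ hq),
    map_multiplicativeLift ν hn' fun q hq => hg q (hnS' _ hq)] at hν
  rw [Nat.eq_of_mul_eq_mul_left (Nat.pos_of_ne_zero hm) hν]

end MultiplicativeLift

section Counting

open Filter Topology

variable {X ι : Type*} {ν : X → ℝ} {d : ι → ℝ} {I : ι × ℕ → X}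

lemma sum_floor_le_card_of_injective (hd : ∀ j, 0 < d j) (hI : Function.Injective I)
    (hν : ∀ j k, ν (I (j, k)) ≤ d j * (k + 1)) {s : ℝ} (hs : 0 ≤ s) [Finite {x // ν x ≤ s}]
    (T : Finset ι) : ∑ j ∈ T, ⌊(d j)⁻¹ * s⌋₊ ≤ Nat.card {x // ν x ≤ s} := by
  let G : Finset (Σ _ : ι, ℕ) := T.sigma fun j => Finset.range ⌊(d j)⁻¹ * s⌋₊
  have hG : ∀ z ∈ G, ν (I (z.1, z.2)) ≤ s := by
    rintro ⟨j, k⟩ hz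
    have hk : ((k + 1 : ℕ) : ℝ) ≤ (d j)⁻¹ * s :=
      (Nat.le_floor_iff (mul_nonneg (inv_nonneg.mpr (hd j).le) hs)).mp
        (Finset.mem_range.mp (Finset.mem_sigma.mp hz).2)
    rw [Nat.cast_add_one, le_inv_mul_iff₀ (hd j)] at hk
    exact (hν j k).trans hk
  have hinj : Function.Injective fun z : G => (⟨I (z.1.1, z.1.2), hG z z.2⟩ : {x // ν x ≤ s}) :=
    fun z w h => Subtype.ext <|
      (Equiv.sigmaEquivProd ι ℕ).injective (hI (congrArg Subtype.val h))
  simpa only [Nat.card_eq_fintype_card, Fintype.card_coe, G, Finset.card_sigma, Finset.card_range]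
    using Nat.card_le_card_of_injective _ hinj

lemma summable_inv_of_tendsto_card_div (hd : ∀ j, 0 < d j) (hI : Function.Injective I)
    (hν : ∀ j k, ν (I (j, k)) ≤ d j * (k + 1)) (hfin : ∀ s, Finite {x // ν x ≤ s}) {c : ℝ}
    (hc : Tendsto (fun s => (Nat.card {x // ν x ≤ s} : ℝ) / s) atTop (𝓝 c)) :
    Summable fun j => (d j)⁻¹ := by
  refine summable_of_sum_le (fun j => inv_nonneg.mpr (hd j).le) (c := c) fun T => ?_
  have hfloor : Tendsto (fun s : ℝ => ∑ j ∈ T, (⌊(d j)⁻¹ * s⌋₊ : ℝ) / s) atTop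
      (𝓝 (∑ j ∈ T, (d j)⁻¹)) :=
    tendsto_finsetSum _ fun j _ => tendsto_nat_floor_mul_div_atTop (inv_nonneg.mpr (hd j).le)
  refine le_of_tendsto_of_tendsto hfloor hc ?_
  filter_upwards [eventually_ge_atTop 0] with s hs
  have := hfin s
  rw [← Finset.sum_div]
  gcongr
  exact_mod_cast sum_floor_le_card_of_injective hd hI hν hs T

lemma not_summable_inv_one_add_mul {N : ℝ} (hN : 0 < N) :
    ¬ Summable fun j : ℕ => (1 + j * N)⁻¹ := by
  intro h
  have hshift := (Real.summable_one_div_nat_add_rpow N⁻¹ 1).mp <| (h.mul_left N).congr fun j => by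
    rw [Real.rpow_one, abs_of_pos (by positivity)]
    field
  exact lt_irrefl _ hshift

lemma exists_injective_map_le_of_isCoprime {M : Type*} [CommSemiring M] (ν : M →* ℕ) {N : ℕ}
    (hN : N ≠ 0) {S : Set ℕ} (hS : ∀ q : ℕ, q.Prime → ¬ q ∣ N → q ∈ S) {f g : ℕ → M}
    (hf : ∀ q ∈ S, ν (f q) = q) (hg : ∀ q ∈ S, ν (g q) = q)
    (hfg : ∀ q ∈ S, ∀ r ∈ S, IsCoprime (f q) (g r)) :
    ∃ I : ℕ × ℕ → M, Function.Injective I ∧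
      ∀ j k, ν (I (j, k)) ≤ (1 + j * N) * N * (k + 1) := by
  let m : ℕ → ℕ := fun j => 1 + j * N
  have hm : ∀ j, m j ≠ 0 := fun j => by positivity
  have hm_inj : Function.Injective m := fun j k h =>
    Nat.eq_of_mul_eq_mul_right (Nat.pos_of_ne_zero hN) (Nat.add_left_cancel h)
  have hm_factors : ∀ j, ∀ q ∈ (m j).primeFactors, q ∈ S := by
    intro j q hq
    have hq_prime := Nat.prime_of_mem_primeFactors hq
    refine hS q hq_prime fun hqN => hq_prime.not_dvd_one ?_
    exact (Nat.dvd_add_left (hqN.mul_left j)).mp (Nat.dvd_of_mem_primeFactors hq)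
  refine ⟨fun z => multiplicativeLift f (m z.1) * multiplicativeLift g (m z.2), ?_, fun j k => ?_⟩
  · exact Set.injOn_univ.mp <|
      (multiplicativeLift_mul_injOn ν hf hg hfg).comp (hm_inj.prodMap hm_inj).injOn
        fun z _ => ⟨⟨hm z.1, hm_factors z.1⟩, hm z.2, hm_factors z.2⟩
  · calc ν (multiplicativeLift f (m j) * multiplicativeLift g (m k)) = m j * m k := by
          rw [map_mul, map_multiplicativeLift ν (hm j) fun q hq => hf q (hm_factors j q hq),
            map_multiplicativeLift ν (hm k) fun q hq => hg q (hm_factors k q hq)]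
      _ ≤ m j * (N + k * N) :=
          Nat.mul_le_mul_left _ (Nat.add_le_add_right (Nat.pos_of_ne_zero hN) _)
      _ = (1 + j * N) * N * (k + 1) := by ring

lemma not_tendsto_card_div_of_isCoprime {M : Type*} [CommSemiring M] (ν : M →* ℕ) {N : ℕ}
    (hN : N ≠ 0) {S : Set ℕ} (hS : ∀ q : ℕ, q.Prime → ¬ q ∣ N → q ∈ S) {f g : ℕ → M}
    (hf : ∀ q ∈ S, ν (f q) = q) (hg : ∀ q ∈ S, ν (g q) = q)
    (hfg : ∀ q ∈ S, ∀ r ∈ S, IsCoprime (f q) (g r))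
    (hfin : ∀ s : ℝ, Finite {x // (ν x : ℝ) ≤ s}) (c : ℝ) :
    ¬ Tendsto (fun s : ℝ => (Nat.card {x // (ν x : ℝ) ≤ s} : ℝ) / s) atTop (𝓝 c) := by
  intro hc
  obtain ⟨I, hI_inj, hI_le⟩ := exists_injective_map_le_of_isCoprime ν hN hS hf hg hfg
  have hN_pos : (0 : ℝ) < N := by positivity
  have hsum : Summable fun j : ℕ => ((1 + j * N : ℝ) * N)⁻¹ :=
    summable_inv_of_tendsto_card_div (ν := fun x => (ν x : ℝ)) (fun j => by positivity) hI_inj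
      (fun j k => by exact_mod_cast hI_le j k) hfin hc
  simp only [mul_inv] at hsum
  exact not_summable_inv_one_add_mul hN_pos
    ((summable_mul_right_iff (inv_ne_zero hN_pos.ne')).mp hsum)

end Counting

section InertPrime

open NumberField

lemma isCoprime_of_absNorm_prime {R : Type*} [CommRing R] [IsDedekindDomain R] [Module.Free ℤ R]
    [Module.Finite ℤ R] {P Q : Ideal R} (hP : (Ideal.absNorm P).Prime)
    (hQ : (Ideal.absNorm Q).Prime) (hPQ : P ≠ Q) : IsCoprime P Q := by
  have isMaximal_of_absNorm_prime : ∀ {I : Ideal R}, (Ideal.absNorm I).Prime → I.IsMaximal := by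
    intro I hI
    have hI_prime := Ideal.isPrime_of_irreducible_absNorm hI
    refine hI_prime.isMaximal ?_
    rintro rfl
    exact hI.ne_zero Ideal.absNorm_bot
  have := isMaximal_of_absNorm_prime hP
  have := isMaximal_of_absNorm_prime hQ
  exact Ideal.isCoprime_of_isMaximal hPQ

variable (L : Type*) [Field L] [NumberField L]

lemma exists_prime_subsingleton_absNorm_eq {N : ℕ} (hN : N ≠ 0) :
    ∃ q : ℕ, q.Prime ∧ ¬ q ∣ N ∧ {I : Ideal (𝓞 L) | Ideal.absNorm I = q}.Subsingleton := by
  by_contra! hall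
  have htwo : ∀ q ∈ {q : ℕ | q.Prime ∧ ¬ q ∣ N}, ∃ P P' : Ideal (𝓞 L),
      Ideal.absNorm P = q ∧ Ideal.absNorm P' = q ∧ P ≠ P' := fun q hq =>
    let ⟨P, hP, P', hP', hne⟩ := hall q hq.1 hq.2
    ⟨P, P', hP, hP', hne⟩
  choose! P P' hP hP' hne using htwo
  have hcoprime : ∀ q ∈ {q : ℕ | q.Prime ∧ ¬ q ∣ N}, ∀ r ∈ {q : ℕ | q.Prime ∧ ¬ q ∣ N},
      IsCoprime (P q) (P' r) := by
    intro q hq r hr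
    refine isCoprime_of_absNorm_prime ((hP q hq).symm ▸ hq.1) ((hP' r hr).symm ▸ hr.1) fun heq => ?_
    obtain rfl : q = r := by rw [← hP q hq, heq, hP' r hr]
    exact hne q hq heq
  exact not_tendsto_card_div_of_isCoprime (Ideal.absNorm : Ideal (𝓞 L) →*₀ ℕ).toMonoidHom hN
    (S := {q | q.Prime ∧ ¬ q ∣ N}) (fun q hq hqN => ⟨hq, hqN⟩) hP hP' hcoprime
    (fun s => (Ideal.finite_setOfPred_absNorm_le ⌊s⌋₊).subset fun _ hI => Nat.le_floor hI) _
    (NumberField.Ideal.tendsto_norm_le_div_atTop L)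

variable {L}

lemma absNorm_eq_pow_inertiaDegIn [IsGalois ℚ L] {q : ℕ} {P : Ideal (𝓞 L)} [P.IsPrime]
    [P.LiesOver (Ideal.span {(q : ℤ)})] :
    Ideal.absNorm P = q ^ (Ideal.span {(q : ℤ)}).inertiaDegIn (𝓞 L) := by
  rw [Ideal.inertiaDegIn_eq_inertiaDeg (Ideal.span {(q : ℤ)}) P Gal(L/ℚ),
    ← Ideal.absNorm_pow_inertiaDeg (Ideal.span {(q : ℤ)}) P,
    Ideal.absNorm_span_natCast, Module.finrank_self, pow_one]

lemma ncard_primesOver_mul_inertiaDegIn_eq_finrank [IsGalois ℚ L] {q : ℕ} (hq : q.Prime)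
    (hdiscr : ¬ (q : ℤ) ∣ discr L) :
    (Ideal.primesOver (Ideal.span {(q : ℤ)}) (𝓞 L)).ncard *
      (Ideal.span {(q : ℤ)}).inertiaDegIn (𝓞 L) = Module.finrank ℚ L := by
  have hqZ : Prime (q : ℤ) := Nat.prime_iff_prime_int.mp hq
  have hunram := (not_dvd_discr_iff_isUnramifiedIn L (𝓞 L) hqZ).mp hdiscr
  have : (Ideal.span {(q : ℤ)}).IsPrime := (Ideal.span_singleton_prime hqZ.ne_zero).mpr hqZ
  obtain ⟨P, hP_prime, hP_over⟩ :=
    (inferInstance : Nonempty (Ideal.primesOver (Ideal.span {(q : ℤ)}) (𝓞 L)))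
  have h := Ideal.ncard_primesOver_mul_ramificationIdxIn_mul_inertiaDegIn
    (Ideal.span {(q : ℤ)}) (𝓞 L) Gal(L/ℚ)
  rwa [Ideal.ramificationIdxIn_eq_ramificationIdx (Ideal.span {(q : ℤ)}) P Gal(L/ℚ),
    hunram.ramificationIdx_eq_one hP_over, one_mul, IsGaloisGroup.card_eq_finrank Gal(L/ℚ) ℚ L] at h

lemma isPrime_span_of_inertiaDegIn_eq_finrank [IsGalois ℚ L] {q : ℕ} (hq : q.Prime)
    (h : (Ideal.span {(q : ℤ)}).inertiaDegIn (𝓞 L) = Module.finrank ℚ L) :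
    (Ideal.span {(q : 𝓞 L)}).IsPrime := by
  have hqZ : Prime (q : ℤ) := Nat.prime_iff_prime_int.mp hq
  have : (Ideal.span {(q : ℤ)}).IsPrime := (Ideal.span_singleton_prime hqZ.ne_zero).mpr hqZ
  obtain ⟨P, hP_prime, hP_over⟩ :=
    (inferInstance : Nonempty (Ideal.primesOver (Ideal.span {(q : ℤ)}) (𝓞 L)))
  have hle : Ideal.span {(q : 𝓞 L)} ≤ P := by
    have hmem : (q : ℤ) ∈ P.under ℤ := hP_over.over ▸ Ideal.mem_span_singleton_self _
    simpa [Ideal.span_singleton_le_iff_mem, Ideal.under, Ideal.mem_comap] using hmem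
  have hnorm : Ideal.absNorm P = Ideal.absNorm (Ideal.span {(q : 𝓞 L)}) := by
    rw [absNorm_eq_pow_inertiaDegIn (q := q), h, Ideal.absNorm_span_natCast, RingOfIntegers.rank]
  obtain ⟨J, hJ⟩ := Ideal.dvd_iff_le.mpr hle
  have hJ_top : J = ⊤ := by
    rw [hJ, map_mul, eq_comm] at hnorm
    refine Ideal.absNorm_eq_one_iff.mp (mul_eq_left₀ ?_ |>.mp hnorm)
    rw [absNorm_eq_pow_inertiaDegIn (q := q)]
    exact pow_ne_zero _ hq.ne_zero
  rwa [hJ, hJ_top, Ideal.mul_top]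

lemma isPrime_span_of_subsingleton_absNorm_eq [IsGalois ℚ L] (hL : (Module.finrank ℚ L).Prime)
    {q : ℕ} (hq : q.Prime) (hdiscr : ¬ (q : ℤ) ∣ discr L)
    (h : {I : Ideal (𝓞 L) | Ideal.absNorm I = q}.Subsingleton) :
    (Ideal.span {(q : 𝓞 L)}).IsPrime := by
  have hmul := ncard_primesOver_mul_inertiaDegIn_eq_finrank hq hdiscr
  rcases (Nat.dvd_prime hL).mp (Dvd.intro_left _ hmul) with hdeg | hdeg
  · have hsub : Ideal.primesOver (Ideal.span {(q : ℤ)}) (𝓞 L) ⊆ {I | Ideal.absNorm I = q} := by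
      rintro P ⟨_, _⟩
      simpa only [Set.mem_ofPred_eq, hdeg, pow_one] using
        absNorm_eq_pow_inertiaDegIn (q := q) (P := P)
    have hle := (Set.ncard_le_one (h.anti hsub).finite).mpr (h.anti hsub)
    rw [hdeg, mul_one] at hmul
    exact absurd hL.one_lt (hmul ▸ hle.not_gt)
  · exact isPrime_span_of_inertiaDegIn_eq_finrank hq hdeg

lemma exists_prime_isPrime_span [IsGalois ℚ L] (hL : (Module.finrank ℚ L).Prime) :
    ∃ q : ℕ, q.Prime ∧ (Ideal.span {(q : 𝓞 L)}).IsPrime := by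
  obtain ⟨q, hq, hqN, hsub⟩ :=
    exists_prime_subsingleton_absNorm_eq L (Int.natAbs_ne_zero.mpr (discr_ne_zero L))
  exact ⟨q, hq, isPrime_span_of_subsingleton_absNorm_eq hL hq (mt Int.natCast_dvd.mp hqN) hsub⟩

end InertPrime

section InvariantValuation

open IsDedekindDomain

variable {R K : Type*} [CommRing R] [IsDedekindDomain R] [Field K] [Algebra R K]
  [IsFractionRing R K]

lemma intValuation_apply_ringEquiv_le (P : HeightOneSpectrum R) {τ : R ≃+* R}
    (hτ : P.asIdeal.map τ = P.asIdeal) (x : R) : P.intValuation (τ x) ≤ P.intValuation x := by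
  rcases eq_or_ne x 0 with rfl | hx
  · rw [map_zero]
  have hval := P.intValuation_eq_exp_neg_multiplicity hx
  have hmem := (P.intValuation_le_pow_iff_mem x _).mp hval.le
  rw [hval, P.intValuation_le_pow_iff_mem]
  simpa only [Ideal.map_pow, hτ] using Ideal.mem_map_of_mem τ hmem

lemma valuation_apply_ringEquiv (P : HeightOneSpectrum R) {τ : R ≃+* R}
    (hτ : P.asIdeal.map τ = P.asIdeal) {σ : K ≃+* K}
    (hστ : ∀ r, σ (algebraMap R K r) = algebraMap R K (τ r)) (x : K) :
    P.valuation K (σ x) = P.valuation K x := by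
  have hτ_symm : P.asIdeal.map τ.symm = P.asIdeal := by
    conv_lhs => rw [← hτ]
    exact Ideal.map_of_equiv τ
  have hint : ∀ r, P.intValuation (τ r) = P.intValuation r := fun r =>
    (intValuation_apply_ringEquiv_le P hτ r).antisymm <| by
      simpa only [RingEquiv.symm_apply_apply] using
        intValuation_apply_ringEquiv_le P hτ_symm (τ r)
  obtain ⟨r, s, -, rfl⟩ := IsFractionRing.div_surjective (A := R) x
  simp only [map_div₀, hστ, HeightOneSpectrum.valuation_of_algebraMap, hint]

open NumberField in
lemma exists_valuation_invariant (L : Type*) [Field L] [NumberField L] {q : ℕ} (hq : q ≠ 0)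
    (hprime : (Ideal.span {(q : 𝓞 L)}).IsPrime) :
    ∃ v : Valuation L (WithZero (Multiplicative ℤ)), v q = WithZero.exp (-1) ∧
      ∀ (σ : L ≃+* L) (x : L), v (σ x) = v x := by
  have hq_int : (q : 𝓞 L) ≠ 0 := Nat.cast_ne_zero.mpr hq
  let P : HeightOneSpectrum (𝓞 L) :=
    ⟨Ideal.span {(q : 𝓞 L)}, hprime, mt Ideal.span_singleton_eq_bot.mp hq_int⟩
  refine ⟨P.valuation L, ?_, fun σ => valuation_apply_ringEquiv P
    (τ := RingOfIntegers.mapRingEquiv σ) ?_ fun _ => rfl⟩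
  · rw [← map_natCast (algebraMap (𝓞 L) L), P.valuation_of_algebraMap]
    exact P.intValuation_singleton hq_int rfl
  · rw [Ideal.map_span, Set.image_singleton, map_natCast]

end InvariantValuation

section DominantTerm

variable {Γ₀ S T : Type*} [LinearOrderedCommGroupWithZero Γ₀]

/-- The index `s₀` carries the unique largest value of `w`, and this value is nonzero. If `w`
lists the valuations of the terms of a sum, the sum is then nonzero. -/
def IsStrictlyDominant (w : S → Γ₀) (s₀ : S) : Prop :=
  w s₀ ≠ 0 ∧ ∀ s, s ≠ s₀ → w s < w s₀

lemma IsStrictlyDominant.mul {w : S → Γ₀} {w' : T → Γ₀} {s₀ : S} {t₀ : T}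
    (h : IsStrictlyDominant w s₀) (h' : IsStrictlyDominant w' t₀) :
    IsStrictlyDominant (fun z : S × T => w z.1 * w' z.2) (s₀, t₀) := by
  refine ⟨mul_ne_zero h.1 h'.1, fun ⟨s, t⟩ hne => ?_⟩
  rcases eq_or_ne s s₀ with rfl | hs
  · have ht : t ≠ t₀ := fun ht => hne (ht ▸ rfl)
    exact mul_lt_mul_of_pos_left (h'.2 t ht) (zero_lt_iff.mpr h.1)
  · have ht : w' t ≤ w' t₀ :=
      (eq_or_ne t t₀).elim (fun ht => ht ▸ le_rfl) fun ht => (h'.2 t ht).le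
    exact (mul_le_mul_right ht _).trans_lt
      (mul_lt_mul_of_pos_right (h.2 s hs) (zero_lt_iff.mpr h'.1))

variable {L : Type*} [Field L] (v : Valuation L Γ₀) (b : L) (n : ℕ)

/-- The `n`-th power of the absolute value that the formal monomial `x * u ^ m`, with `u ^ n = b`,
inherits from `v`. The power avoids extending the value group by an `n`-th root of `v b`. -/
def monomialWeight (x : L) (m : ℕ) : Γ₀ := v x ^ n * v b ^ m

variable {v b n}

lemma monomialWeight_mul (x y : L) (i j : ℕ) :
    monomialWeight v b n (x * y) (i + j) = monomialWeight v b n x i * monomialWeight v b n y j := by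
  simp only [monomialWeight, map_mul, mul_pow, pow_add, mul_mul_mul_comm]

lemma monomialWeight_mul_pow_div_mod (x : L) (m : ℕ) :
    monomialWeight v b n (x * b ^ (m / n)) (m % n) = monomialWeight v b n x m := by
  simp only [monomialWeight, map_mul, map_pow, mul_pow, mul_assoc, ← pow_mul, ← pow_add,
    Nat.div_add_mod']

lemma monomialWeight_ne_zero (hb : b ≠ 0) {x : L} (hx : x ≠ 0) (m : ℕ) :
    monomialWeight v b n x m ≠ 0 :=
  mul_ne_zero (pow_ne_zero _ (v.ne_zero_iff.mpr hx)) (pow_ne_zero _ (v.ne_zero_iff.mpr hb))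

lemma exists_isStrictlyDominant_monomialWeight (hb : b ≠ 0)
    (hv : ∀ y : L, ∀ i, 0 < i → i < n → v y ^ n ≠ v b ^ i) {x : Fin n → L} (hx : x ≠ 0) :
    ∃ i₀, IsStrictlyDominant (fun i : Fin n => monomialWeight v b n (x i) i) i₀ := by
  obtain ⟨i₁, hi₁⟩ := Function.ne_iff.mp hx
  have : Nonempty (Fin n) := ⟨i₁⟩
  obtain ⟨i₀, hmax⟩ := Finite.exists_max fun i : Fin n => monomialWeight v b n (x i) i
  have hne : monomialWeight v b n (x i₀) i₀ ≠ 0 := fun h =>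
    monomialWeight_ne_zero hb hi₁ _ (le_zero_iff.mp (h ▸ hmax i₁))
  have hvb : v b ≠ 0 := v.ne_zero_iff.mpr hb
  have hinj : ∀ i j : Fin n, i < j → monomialWeight v b n (x i) i ≠ 0 →
      monomialWeight v b n (x i) i ≠ monomialWeight v b n (x j) j := by
    intro i j hij h0 heq
    have hxj : v (x j) ^ n ≠ 0 := left_ne_zero_of_mul (heq ▸ h0)
    refine hv (x i / x j) (j - i) (Nat.sub_pos_of_lt hij) (by lia) ?_
    rw [map_div₀, div_pow, pow_sub₀ _ hvb hij.le, div_eq_iff hxj]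
    refine mul_right_cancel₀ (pow_ne_zero i hvb) (heq.trans ?_)
    rw [monomialWeight]
    field_simp
  refine ⟨i₀, hne, fun i hi => (hmax i).lt_of_ne fun heq => ?_⟩
  rcases lt_or_gt_of_ne hi with hlt | hlt
  · exact hinj _ _ hlt (heq ▸ hne) heq
  · exact hinj _ _ hlt hne heq.symm

lemma val_pow_ne_pow_of_eq_exp_neg_one {v : Valuation L (WithZero (Multiplicative ℤ))}
    (hvb : v b = WithZero.exp (-1)) (y : L) (i : ℕ) (hi : 0 < i) (hin : i < n) :
    v y ^ n ≠ v b ^ i := by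
  intro h
  have hlog := congrArg WithZero.log h
  simp only [hvb, WithZero.log_pow, WithZero.log_exp, nsmul_eq_mul] at hlog
  have hdvd : (n : ℤ) ∣ i := ⟨-WithZero.log (v y), by linarith⟩
  exact hin.not_ge (Nat.le_of_dvd hi (Int.natCast_dvd_natCast.mp hdvd))

end DominantTerm

section CyclicAlgebra

universe u v

variable {K : Type u} {L : Type v} [Field K] [Field L] [Algebra K L]

/-- A `K`-algebra `A` containing the ingredients of the cyclic algebra `(L/K, σ, a)`: a copy `ι` of
`L`, and an element `u` inducing `σ` on it by conjugation, with `u ^ orderOf σ = a`. The cyclic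
algebra itself is the `K`-span of the products `ι x * u ^ m`, see `CyclicPresentation.subalgebra`;
allowing `A` to be larger lets it be constructed without verifying associativity. -/
structure CyclicPresentation (σ : L ≃ₐ[K] L) (a : K) (A : Type*) [Ring A] [Algebra K A] where
  ι : L →ₐ[K] A
  u : A
  u_mul_ι : ∀ x, u * ι x = ι (σ x) * u
  u_pow_orderOf : u ^ orderOf σ = algebraMap K A a

namespace CyclicPresentation

variable {σ : L ≃ₐ[K] L} {a : K} {A : Type*} [Ring A] [Algebra K A]

open scoped TensorProduct in
/-- Conjugation by `σ` acts on multiplications by elements of `L` inside `End_K L` as `σ` does; an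
auxiliary scalar `α` adjusts `σ ^ orderOf σ = 1` to `a`. -/
def ofRoot {Ω : Type*} [CommRing Ω] [Algebra K Ω] (σ : L ≃ₐ[K] L) {α : Ω}
    (hα : α ^ orderOf σ = algebraMap K Ω a) :
    CyclicPresentation σ a (Module.End K L ⊗[K] Ω) where
  ι := Algebra.TensorProduct.includeLeft.comp (Algebra.lmul K L)
  u := σ.toLinearMap ⊗ₜ α
  u_mul_ι x := by
    have hconj : σ.toLinearMap * Algebra.lmul K L x = Algebra.lmul K L (σ x) * σ.toLinearMap :=
      LinearMap.ext fun y => map_mul σ x y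
    simp only [AlgHom.comp_apply, Algebra.TensorProduct.includeLeft_apply,
      Algebra.TensorProduct.tmul_mul_tmul, hconj, mul_one, one_mul]
  u_pow_orderOf := by
    have hpow : σ.toLinearMap ^ orderOf σ = (1 : Module.End K L) := by
      rw [← AlgEquiv.pow_toLinearMap, pow_orderOf_eq_one, AlgEquiv.one_toLinearMap]
    rw [Algebra.TensorProduct.tmul_pow, hpow, hα, Algebra.TensorProduct.algebraMap_apply',
      Algebra.algebraMap_eq_smul_one]

lemma exists_nontrivial [FiniteDimensional K L] (σ : L ≃ₐ[K] L) (a : K) :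
    ∃ (A : Type (max u v)) (_ : Ring A) (_ : Algebra K A),
      Nontrivial A ∧ Nonempty (CyclicPresentation σ a A) := by
  obtain ⟨α, hα⟩ :=
    IsAlgClosed.exists_pow_nat_eq (algebraMap K (AlgebraicClosure K) a) (orderOf_pos σ)
  exact ⟨_, _, _, inferInstance, ⟨ofRoot σ hα⟩⟩

variable (P : CyclicPresentation σ a A)

lemma u_pow_mul_ι (i : ℕ) (x : L) : P.u ^ i * P.ι x = P.ι ((σ ^ i) x) * P.u ^ i := by
  induction i generalizing x with
  | zero => simp only [pow_zero, one_mul, mul_one, AlgEquiv.one_apply]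
  | succ i ih =>
    rw [pow_succ, mul_assoc, P.u_mul_ι, ← mul_assoc, ih, mul_assoc, ← AlgEquiv.mul_apply,
      ← pow_succ]

lemma monomial_mul_monomial (x y : L) (i j : ℕ) :
    P.ι x * P.u ^ i * (P.ι y * P.u ^ j) = P.ι (x * (σ ^ i) y) * P.u ^ (i + j) := by
  rw [mul_assoc, ← mul_assoc (P.u ^ i), P.u_pow_mul_ι, map_mul, pow_add]
  simp only [mul_assoc]

lemma monomial_eq_mod_orderOf (x : L) (m : ℕ) :
    P.ι x * P.u ^ m =
      P.ι (x * algebraMap K L a ^ (m / orderOf σ)) * P.u ^ (m % orderOf σ) := by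
  conv_lhs => rw [← Nat.div_add_mod m (orderOf σ), pow_add, pow_mul, P.u_pow_orderOf]
  rw [map_mul, map_pow, AlgHom.commutes, mul_assoc]

lemma isUnit_u [FiniteDimensional K L] (ha : a ≠ 0) : IsUnit P.u := by
  rw [← isUnit_pow_iff (orderOf_pos σ).ne', P.u_pow_orderOf]
  exact (IsUnit.mk0 a ha).map (algebraMap K A)

/-- The `K`-linear map sending `(x₀, x₁, …)` to `∑ i, x i * u ^ i`, which parametrizes the cyclic
algebra. -/
noncomputable def combination : (Fin (orderOf σ) → L) →ₗ[K] A :=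
  ∑ i : Fin (orderOf σ),
    LinearMap.mulRight K (P.u ^ (i : ℕ)) ∘ₗ P.ι.toLinearMap ∘ₗ LinearMap.proj i

lemma combination_apply (x : Fin (orderOf σ) → L) :
    P.combination x = ∑ i, P.ι (x i) * P.u ^ (i : ℕ) := by
  simp only [combination, LinearMap.sum_apply, LinearMap.comp_apply, LinearMap.proj_apply,
    AlgHom.toLinearMap_apply, LinearMap.mulRight_apply]

lemma combination_single (i : Fin (orderOf σ)) (z : L) :
    P.combination (Pi.single i z) = P.ι z * P.u ^ (i : ℕ) := by
  rw [combination_apply, Fintype.sum_eq_single i, Pi.single_eq_same]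
  intro j hj
  rw [Pi.single_eq_of_ne hj, map_zero, zero_mul]

lemma combination_mul_combination (x y : Fin (orderOf σ) → L) :
    P.combination x * P.combination y =
      ∑ z : Fin (orderOf σ) × Fin (orderOf σ),
        P.ι (x z.1 * (σ ^ (z.1 : ℕ)) (y z.2)) * P.u ^ (z.1 + z.2 : ℕ) := by
  simp only [combination_apply, Finset.sum_mul_sum, Fintype.sum_prod_type, monomial_mul_monomial]

section FiniteDimensional

variable [FiniteDimensional K L]

/-- The exponent `m` reduced modulo the order of `σ`: the index of the coordinate in which multiples
of `u ^ m` live, see `CyclicPresentation.monomial_eq_combination`. -/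
noncomputable def residue (σ : L ≃ₐ[K] L) (m : ℕ) : Fin (orderOf σ) :=
  ⟨m % orderOf σ, Nat.mod_lt _ (orderOf_pos σ)⟩

lemma monomial_eq_combination (x : L) (m : ℕ) :
    P.ι x * P.u ^ m =
      P.combination (Pi.single (residue σ m) (x * algebraMap K L a ^ (m / orderOf σ))) := by
  rw [combination_single, monomial_eq_mod_orderOf]
  rfl

/-- The cyclic algebra `(L/K, σ, a)`, as the span of the products `ι x * u ^ i` inside `A`. -/
noncomputable def subalgebra : Subalgebra K A :=
  (LinearMap.range P.combination).toSubalgebra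
    ⟨_, (P.monomial_eq_combination 1 0).symm.trans (by rw [map_one, pow_zero, mul_one])⟩
    (by
      rintro _ _ ⟨x, rfl⟩ ⟨y, rfl⟩
      rw [combination_mul_combination]
      exact Submodule.sum_mem _ fun z _ => ⟨_, (P.monomial_eq_combination _ _).symm⟩)

lemma monomial_mem_subalgebra (x : L) (m : ℕ) : P.ι x * P.u ^ m ∈ P.subalgebra :=
  ⟨_, (P.monomial_eq_combination x m).symm⟩

lemma ι_mem_subalgebra (x : L) : P.ι x ∈ P.subalgebra := by
  simpa only [pow_zero, mul_one] using P.monomial_mem_subalgebra x 0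

lemma u_mem_subalgebra : P.u ∈ P.subalgebra := by
  simpa only [map_one, one_mul, pow_one] using P.monomial_mem_subalgebra 1 1

section Injectivity

variable [IsGalois K L] [Nontrivial A]

lemma combination_injective (ha : a ≠ 0) : Function.Injective P.combination := by
  obtain ⟨l, hl⟩ := Field.exists_primitive_element K L
  have hadjoin : Algebra.adjoin K {l} = ⊤ := by
    rw [← IntermediateField.adjoin_simple_toSubalgebra_of_isAlgebraic (IsAlgebraic.of_finite K l),
      hl, IntermediateField.top_toSubalgebra]
  let : Module L A := Module.compHom A P.ι.toRingHom
  let ρ : Module.End L A :=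
    { toFun := fun y => y * P.ι l
      map_add' := fun y z => add_mul y z (P.ι l)
      map_smul' := fun x y => mul_assoc (P.ι x) y (P.ι l) }
  have heigen : ∀ i : Fin (orderOf σ), ρ.HasEigenvector ((σ ^ (i : ℕ)) l) (P.u ^ (i : ℕ)) :=
    fun i => ⟨Module.End.mem_eigenspace_iff.mpr (P.u_pow_mul_ι i l),
      ((P.isUnit_u ha).pow i).ne_zero⟩
  have hdistinct : Function.Injective fun i : Fin (orderOf σ) => (σ ^ (i : ℕ)) l := by
    intro i j hij
    have hpow : (σ ^ (i : ℕ)).toAlgHom = (σ ^ (j : ℕ)).toAlgHom :=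
      AlgHom.ext_of_adjoin_eq_top hadjoin (Set.eqOn_singleton.mpr hij)
    exact Fin.ext (pow_injOn_Iio_orderOf i.isLt j.isLt (AlgEquiv.coe_toAlgHom_injective hpow))
  have hindep := Module.End.eigenvectors_linearIndependent' ρ _ hdistinct _ heigen
  rw [injective_iff_map_eq_zero]
  intro x hx
  rw [combination_apply] at hx
  exact funext (Fintype.linearIndependent_iff.mp hindep x hx)

lemma finrank_subalgebra (ha : a ≠ 0) :
    Module.finrank K P.subalgebra = orderOf σ * Module.finrank K L := by
  calc Module.finrank K P.subalgebra = Module.finrank K (Fin (orderOf σ) → L) :=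
        (LinearEquiv.ofInjective _ (P.combination_injective ha)).finrank_eq.symm
    _ = orderOf σ * Module.finrank K L := by
        rw [Module.finrank_pi_fintype, Finset.sum_const, Finset.card_univ, Fintype.card_fin,
          smul_eq_mul]

lemma sum_monomial_ne_zero (ha : a ≠ 0) {Γ₀ S : Type*} [LinearOrderedCommGroupWithZero Γ₀]
    (v : Valuation L Γ₀) [Fintype S] {c : S → L} {m : S → ℕ} {s₀ : S}
    (h : IsStrictlyDominant
      (fun s => monomialWeight v (algebraMap K L a) (orderOf σ) (c s) (m s)) s₀) :
    ∑ s, P.ι (c s) * P.u ^ m s ≠ 0 := by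
  classical
  let r : S → L := fun s => c s * algebraMap K L a ^ (m s / orderOf σ)
  have hsum : ∑ s, P.ι (c s) * P.u ^ m s =
      P.combination (∑ s, Pi.single (residue σ (m s)) (r s)) := by
    rw [map_sum]
    exact Finset.sum_congr rfl fun s _ => P.monomial_eq_combination (c s) (m s)
  have hr_lt : ∀ s, s ≠ s₀ → residue σ (m s) = residue σ (m s₀) → v (r s) < v (r s₀) := by
    intro s hs hres
    have hmod : m s % orderOf σ = m s₀ % orderOf σ := congrArg Fin.val hres
    have hlt := h.2 s hs
    simp only [← monomialWeight_mul_pow_div_mod _ (m s), ← monomialWeight_mul_pow_div_mod _ (m s₀),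
      hmod] at hlt
    exact lt_of_pow_lt_pow_left₀ _ zero_le (lt_of_mul_lt_mul_right hlt zero_le)
  have hr_ne : v (r s₀) ≠ 0 := by
    have hne := h.1
    simp only [← monomialWeight_mul_pow_div_mod _ (m s₀)] at hne
    exact (pow_ne_zero_iff (orderOf_pos σ).ne').mp (left_ne_zero_of_mul hne)
  rw [hsum, ne_eq, map_eq_zero_iff _ (P.combination_injective ha)]
  intro hzero
  have hcoord := congrArg v (congrFun hzero (residue σ (m s₀)))
  rw [Finset.sum_apply, v.map_sum_eq_of_lt (Finset.mem_univ s₀), Pi.single_eq_same,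
    Pi.zero_apply, map_zero] at hcoord
  · exact hr_ne hcoord
  · intro s hs
    have hs : s ≠ s₀ := by simpa using hs
    rw [Pi.single_eq_same]
    by_cases hres : residue σ (m s₀) = residue σ (m s)
    · rw [hres, Pi.single_eq_same]
      exact hr_lt s hs hres.symm
    · rw [Pi.single_eq_of_ne hres, map_zero]
      exact zero_lt_iff.mpr hr_ne

lemma isDomain_subalgebra (ha : a ≠ 0) {Γ₀ : Type*} [LinearOrderedCommGroupWithZero Γ₀]
    (v : Valuation L Γ₀) (hσ : ∀ x, v (σ x) = v x)
    (hv : ∀ y : L, ∀ i, 0 < i → i < orderOf σ → v y ^ orderOf σ ≠ v (algebraMap K L a) ^ i) :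
    IsDomain P.subalgebra := by
  have hb : algebraMap K L a ≠ 0 := (map_ne_zero _).mpr ha
  have hσ_pow : ∀ i x, v ((σ ^ i) x) = v x := by
    intro i x
    induction i with
    | zero => rw [pow_zero, AlgEquiv.one_apply]
    | succ i ih => rw [pow_succ', AlgEquiv.mul_apply, hσ, ih]
  have hne : ∀ x y, x ≠ 0 → y ≠ 0 → P.combination x * P.combination y ≠ 0 := by
    intro x y hx hy
    obtain ⟨i₀, hi₀⟩ := exists_isStrictlyDominant_monomialWeight hb hv hx
    obtain ⟨j₀, hj₀⟩ := exists_isStrictlyDominant_monomialWeight hb hv hy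
    rw [combination_mul_combination]
    refine P.sum_monomial_ne_zero ha v (s₀ := (i₀, j₀)) ?_
    convert hi₀.mul hj₀ using 2 with z
    rw [← monomialWeight_mul]
    simp only [monomialWeight, map_mul, hσ_pow]
  have : NoZeroDivisors P.subalgebra := by
    refine ⟨?_⟩
    rintro ⟨_, x, rfl⟩ ⟨_, y, rfl⟩ hxy
    by_contra! hcon
    refine hne x y ?_ ?_ (congrArg Subtype.val hxy)
    · rintro rfl
      exact hcon.1 (Subtype.ext (map_zero _))
    · rintro rfl
      exact hcon.2 (Subtype.ext (map_zero _))
  exact NoZeroDivisors.to_isDomain _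

lemma eq_zero_of_commute_ι (ha : a ≠ 0) {x : Fin (orderOf σ) → L}
    (hx : ∀ l, Commute (P.ι l) (P.combination x)) {i : Fin (orderOf σ)} (hi : (i : ℕ) ≠ 0) :
    x i = 0 := by
  have hcoord : ∀ l, l * x i = x i * (σ ^ (i : ℕ)) l := by
    intro l
    have hleft : P.ι l * P.combination x = P.combination fun i => l * x i := by
      simp only [combination_apply, Finset.mul_sum, map_mul, mul_assoc]
    have hright : P.combination x * P.ι l = P.combination fun i => x i * (σ ^ (i : ℕ)) l := by
      simp only [combination_apply, Finset.sum_mul, map_mul, mul_assoc, u_pow_mul_ι]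
    exact congrFun (P.combination_injective ha (hleft.symm.trans ((hx l).eq.trans hright))) i
  by_contra hxi
  have hσi : σ ^ (i : ℕ) = 1 :=
    AlgEquiv.ext fun l => (mul_left_cancel₀ hxi ((mul_comm _ _).trans (hcoord l))).symm
  exact pow_ne_one_of_lt_orderOf hi i.isLt hσi

lemma center_subalgebra (ha : a ≠ 0) (hσ : ∀ g : L ≃ₐ[K] L, g ∈ Subgroup.zpowers σ) :
    Subalgebra.center K P.subalgebra = ⊥ := by
  rw [eq_bot_iff]
  rintro ⟨_, x, rfl⟩ hcenter
  have hcomm : ∀ d ∈ P.subalgebra, Commute d (P.combination x) := fun d hd =>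
    congrArg Subtype.val (Subalgebra.mem_center_iff.mp hcenter ⟨d, hd⟩)
  let i₀ : Fin (orderOf σ) := ⟨0, orderOf_pos σ⟩
  have hx : P.combination x = P.ι (x i₀) := by
    rw [combination_apply, Fintype.sum_eq_single i₀, pow_zero, mul_one]
    intro i hi
    rw [P.eq_zero_of_commute_ι ha (fun l => hcomm _ (P.ι_mem_subalgebra l))
      (fun h => hi (Fin.ext h)), map_zero, zero_mul]
  have hfixed : σ (x i₀) = x i₀ := by
    have hu := (hcomm _ P.u_mem_subalgebra).eq
    rw [hx, P.u_mul_ι] at hu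
    exact P.ι.toRingHom.injective ((P.isUnit_u ha).mul_right_cancel hu)
  have hbot : x i₀ ∈ (⊥ : IntermediateField K L) := by
    rw [IsGalois.mem_bot_iff_fixed]
    have hle : Subgroup.zpowers σ ≤ MulAction.stabilizer (L ≃ₐ[K] L) (x i₀) :=
      Subgroup.zpowers_le.mpr hfixed
    exact fun g => hle (hσ g)
  obtain ⟨r, hr⟩ := IntermediateField.mem_bot.mp hbot
  refine Algebra.mem_bot.mpr ⟨r, Subtype.ext ?_⟩
  change algebraMap K A r = P.combination x
  rw [hx, ← hr, AlgHom.commutes]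

end Injectivity

end FiniteDimensional

end CyclicPresentation

end CyclicAlgebra

/-- Let `p` be a prime and `L/ℚ` a cyclic Galois extension of degree `p`.  Then there
is a central division algebra `D` over `ℚ` of degree `p` (center equal to `ℚ` and
`dim_ℚ D = p²`) together with a `ℚ`-algebra embedding of `L` into `D`, whose image is a
maximal subfield of `D` (of dimension `p` over `ℚ`). -/
theorem exists_central_division_algebra_with_maximal_subfield
    (p : ℕ) (hp : p.Prime) (L : Type) [Field L] [Algebra ℚ L] [IsGalois ℚ L]
    (hdim : Module.finrank ℚ L = p) (hcyc : IsCyclic (L ≃ₐ[ℚ] L)) :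
    ∃ D : DivisionAlgebraOverQ,
      Subalgebra.center ℚ D.carrier = ⊥ ∧
      Module.finrank ℚ D.carrier = p ^ 2 ∧
      ∃ f : L →ₐ[ℚ] D.carrier, Function.Injective f ∧
        Module.finrank ℚ f.range = p := by
  have : CharZero L := algebraRat.charZero L
  obtain rfl : ‹Algebra ℚ L› = DivisionRing.toRatAlgebra := Subsingleton.elim _ _
  have : FiniteDimensional ℚ L := Module.finite_of_finrank_pos (hdim ▸ hp.pos)
  have : NumberField L := ⟨⟩
  obtain ⟨q, hq, hq_inert⟩ := exists_prime_isPrime_span (hdim ▸ hp)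
  obtain ⟨v, hvq, hv_inv⟩ := exists_valuation_invariant L hq.ne_zero hq_inert
  obtain ⟨σ, hσ⟩ := hcyc.exists_generator
  have hσ_order : orderOf σ = p := by
    rw [orderOf_eq_card_of_forall_mem_zpowers hσ, IsGalois.card_aut_eq_finrank, hdim]
  have hq_ne : (q : ℚ) ≠ 0 := Nat.cast_ne_zero.mpr hq.ne_zero
  obtain ⟨A, _, _, _, ⟨P⟩⟩ := CyclicPresentation.exists_nontrivial σ (q : ℚ)
  have hfinrank : Module.finrank ℚ P.subalgebra = p ^ 2 := by
    rw [P.finrank_subalgebra hq_ne, hσ_order, hdim, sq]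
  have : IsDomain P.subalgebra := P.isDomain_subalgebra hq_ne v
    (hv_inv σ.toRingEquiv) (val_pow_ne_pow_of_eq_exp_neg_one (by rwa [map_natCast]))
  have : FiniteDimensional ℚ P.subalgebra :=
    Module.finite_of_finrank_pos (hfinrank ▸ pow_pos hp.pos 2)
  let f : L →ₐ[ℚ] P.subalgebra := P.ι.codRestrict P.subalgebra P.ι_mem_subalgebra
  have hf : Function.Injective f := f.toRingHom.injective
  exact ⟨@DivisionAlgebraOverQ.mk P.subalgebra (divisionRingOfFiniteDimensional ℚ P.subalgebra)
      P.subalgebra.algebra, P.center_subalgebra hq_ne hσ, hfinrank, f, hf,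
    (AlgEquiv.ofInjective f hf).toLinearEquiv.finrank_eq.symm.trans hdim⟩
end

section
/- (Theorem: embedding criterion.) Let F be a field, K/F a finite field extension of degree b, D a division ring with center K of degree a (dim_K D = a²), regarded as an F-algebra via F ⊆ K ⊆ D, and E a division ring with center F of degree N = nab (dim_F E = N²) for some positive integer n. Then D is isomorphic to an F-subalgebra of E (i.e., there exists an injective F-algebra homomorphism D → E) if and only if the central simple K-algebra (E ⊗_F K) ⊗_K Dᵒᵖ is Brauer-equivalent over K to some central simple K-algebra of degree n (i.e., of K-dimension n²). -/
open scoped TensorProduct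

/-- A bundled (associative unital) algebra over a field `K`. -/
structure BundledAlgebra (K : Type) [Field K] : Type 1 where
  carrier : Type
  [ring : Ring carrier]
  [algebra : Algebra K carrier]

attribute [instance] BundledAlgebra.ring
attribute [instance] BundledAlgebra.algebra

/-!
An embedding `D → E` makes `E` an `E`-`D`-bimodule, that is, a module over
`A = (K ⊗[F] E) ⊗[K] Dᵐᵒᵖ` of `K`-dimension `d = [E : F] / [K : F]`. Conversely, every `A`-module
of that dimension is, by counting, isomorphic to `E` as an `E`-module, and the commuting action of
`Dᵐᵒᵖ` is then by right multiplications. Writing `A ≅ M_r(Δ)` with `Δ` a division algebra, the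
dimensions of the `A`-modules are the multiples of `r * [Δ : K]`, and `d` is such a multiple exactly
when `A` is Brauer-equivalent to some `M_t(Δ)` of degree `n`, because `d ^ 2 = [A : K] * n ^ 2`.
-/

universe u

section TensorProduct

open TensorProduct

section Coordinates

variable {k : Type*} [CommRing k] {B C : Type*} [Ring B] [Algebra k B] [Ring C] [Algebra k C]
  {ι : Type*} [DecidableEq ι] (β : Module.Basis ι k B)

theorem equivFinsuppOfBasisLeft_mul_one_tmul (x : B ⊗[k] C) (c : C) (i : ι) :
    equivFinsuppOfBasisLeft β (x * (1 ⊗ₜ c)) i = equivFinsuppOfBasisLeft β x i * c := by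
  induction x with
  | zero => simp
  | tmul b c' => simp [Algebra.TensorProduct.tmul_mul_tmul]
  | add x y hx hy => simp [add_mul, hx, hy]

theorem equivFinsuppOfBasisLeft_one_tmul_mul (x : B ⊗[k] C) (c : C) (i : ι) :
    equivFinsuppOfBasisLeft β ((1 ⊗ₜ c) * x) i = c * equivFinsuppOfBasisLeft β x i := by
  induction x with
  | zero => simp
  | tmul b c' => simp [Algebra.TensorProduct.tmul_mul_tmul]
  | add x y hx hy => simp [mul_add, hx, hy]

theorem exists_mem_equivFinsuppOfBasisLeft_eq_one [IsSimpleRing C]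
    (I : TwoSidedIdeal (B ⊗[k] C)) {x : B ⊗[k] C} (hx : x ∈ I) {i : ι}
    (hi : equivFinsuppOfBasisLeft β x i ≠ 0) :
    ∃ y ∈ I, (equivFinsuppOfBasisLeft β y).support ⊆ (equivFinsuppOfBasisLeft β x).support ∧
      equivFinsuppOfBasisLeft β y i = 1 := by
  classical
  let Φ := equivFinsuppOfBasisLeft (N := C) β
  let S : Set (B ⊗[k] C) := {y | y ∈ I ∧ ∀ j, Φ x j = 0 → Φ y j = 0}
  let J : TwoSidedIdeal C := .mk' {c | ∃ y ∈ S, Φ y i = c}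
    ⟨0, ⟨I.zero_mem, by simp⟩, by simp⟩
    (by
      rintro _ _ ⟨y, hy, rfl⟩ ⟨z, hz, rfl⟩
      exact ⟨y + z, ⟨I.add_mem hy.1 hz.1, fun j hj => by simp [hy.2 j hj, hz.2 j hj]⟩, by simp⟩)
    (by
      rintro _ ⟨y, hy, rfl⟩
      exact ⟨-y, ⟨I.neg_mem hy.1, fun j hj => by simp [hy.2 j hj]⟩, by simp⟩)
    (by
      rintro c _ ⟨y, hy, rfl⟩
      refine ⟨(1 ⊗ₜ c) * y, ⟨I.mul_mem_left _ _ hy.1, fun j hj => ?_⟩,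
        equivFinsuppOfBasisLeft_one_tmul_mul β y c i⟩
      rw [equivFinsuppOfBasisLeft_one_tmul_mul, hy.2 j hj, mul_zero])
    (by
      rintro _ c ⟨y, hy, rfl⟩
      refine ⟨y * (1 ⊗ₜ c), ⟨I.mul_mem_right _ _ hy.1, fun j hj => ?_⟩,
        equivFinsuppOfBasisLeft_mul_one_tmul β y c i⟩
      rw [equivFinsuppOfBasisLeft_mul_one_tmul, hy.2 j hj, zero_mul])
  have hJ : Φ x i ∈ J := by
    rw [TwoSidedIdeal.mem_mk']
    exact ⟨x, ⟨hx, fun _ => id⟩, rfl⟩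
  have hone := IsSimpleRing.one_mem_of_ne_zero_mem J hi hJ
  rw [TwoSidedIdeal.mem_mk'] at hone
  obtain ⟨y, ⟨hyI, hy⟩, hyi⟩ := hone
  exact ⟨y, hyI, fun j => by simpa using mt (hy j), hyi⟩

end Coordinates

theorem exists_eq_tmul_one_of_forall_commute {k B C : Type*} [CommRing k] [Ring B] [Algebra k B]
    [Module.Free k B] [Ring C] [Algebra k C] [Algebra.IsCentral k C] {x : B ⊗[k] C}
    (hx : ∀ c : C, Commute (1 ⊗ₜ c) x) : ∃ b : B, x = b ⊗ₜ 1 := by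
  have hmem : x ∈ Subalgebra.centralizer k
      (Algebra.TensorProduct.includeRight : C →ₐ[k] B ⊗[k] C).range := by
    rw [Subalgebra.mem_centralizer_iff]
    rintro _ ⟨c, rfl⟩
    exact hx c
  rw [Subalgebra.centralizer_range_includeRight_eq_center_tensorProduct] at hmem
  obtain ⟨z, rfl⟩ := hmem
  clear hx
  induction z with
  | zero => exact ⟨0, by simp⟩
  | tmul b c =>
    obtain ⟨a, ha⟩ := (Algebra.IsCentral.mem_center_iff k).1 c.2
    exact ⟨a • b, by simp [ha, Algebra.algebraMap_eq_smul_one, smul_tmul]⟩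
  | add y z hy hz =>
    obtain ⟨b, hb⟩ := hy
    obtain ⟨b', hb'⟩ := hz
    exact ⟨b + b', by rw [map_add, hb, hb', add_tmul]⟩

variable {k : Type*} [Field k] {B C : Type*} [Ring B] [Algebra k B] [Ring C] [Algebra k C]

/- A shortest nonzero element of `I`, normalised to have a coordinate equal to `1`, commutes with
`1 ⊗ C`, because its commutators with the elements `1 ⊗ c` are shorter. -/
theorem exists_tmul_one_mem_of_ne_bot [IsSimpleRing C] [Algebra.IsCentral k C]
    {I : TwoSidedIdeal (B ⊗[k] C)} (hI : I ≠ ⊥) : ∃ b : B, b ≠ 0 ∧ b ⊗ₜ 1 ∈ I := by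
  classical
  let β := Module.Basis.ofVectorSpace k B
  let Φ := equivFinsuppOfBasisLeft (N := C) β
  obtain ⟨x, ⟨hxI, hx0⟩, hmin⟩ := exists_minimalFor_of_wellFoundedLT
    (fun x => x ∈ I ∧ x ≠ 0) (fun x => (Φ x).support.card)
    (SetLike.exists_of_lt (bot_lt_iff_ne_bot.mpr hI))
  obtain ⟨i, hi⟩ := Finsupp.ne_iff.1 (Φ.map_ne_zero_iff.2 hx0)
  obtain ⟨y, hyI, hyx, hyi⟩ := exists_mem_equivFinsuppOfBasisLeft_eq_one β I hxI hi
  have hcomm (c : C) : Commute (1 ⊗ₜ c) y := by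
    by_contra hne
    let z := 1 ⊗ₜ c * y - y * 1 ⊗ₜ c
    have hz (j) : Φ z j = c * Φ y j - Φ y j * c := by
      simp only [z, Φ, map_sub, Finsupp.sub_apply, equivFinsuppOfBasisLeft_one_tmul_mul,
        equivFinsuppOfBasisLeft_mul_one_tmul]
    have hzx : (Φ z).support ⊂ (Φ x).support := by
      refine Finset.ssubset_iff_of_subset (fun j hj => hyx ?_) |>.2
        ⟨i, Finsupp.mem_support_iff.2 hi, ?_⟩
      · contrapose! hj
        simp [hz, Φ, Finsupp.notMem_support_iff.1 hj]
      · simp [hz, Φ, hyi]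
    have hzI : z ∈ I := I.sub_mem (I.mul_mem_left _ _ hyI) (I.mul_mem_right _ _ hyI)
    have hcard := Finset.card_lt_card hzx
    exact hcard.not_ge (hmin ⟨hzI, sub_ne_zero.2 hne⟩ hcard.le)
  obtain ⟨b, rfl⟩ := exists_eq_tmul_one_of_forall_commute hcomm
  refine ⟨b, ?_, hyI⟩
  rintro rfl
  simp at hyi

theorem isSimpleRing_tensorProduct [IsSimpleRing B] [IsSimpleRing C] [Algebra.IsCentral k C] :
    IsSimpleRing (B ⊗[k] C) := by
  refine .of_eq_bot_or_eq_top fun I => or_iff_not_imp_left.2 fun hI => ?_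
  obtain ⟨b, hb, hbI⟩ := exists_tmul_one_mem_of_ne_bot hI
  rw [← I.one_mem_iff]
  have hone := IsSimpleRing.one_mem_of_ne_zero_mem
    (I.comap (Algebra.TensorProduct.includeLeft : B →ₐ[k] B ⊗[k] C)) hb
    ((TwoSidedIdeal.mem_comap _).2 hbI)
  rwa [TwoSidedIdeal.mem_comap, map_one] at hone

theorem isCentral_tensorProduct {S : Type*} [CommRing S] [Algebra k S] [Algebra S B]
    [IsScalarTower k S B] [Algebra.IsCentral S B] [Nontrivial C] [Algebra.IsCentral k C] :
    Algebra.IsCentral S (B ⊗[k] C) where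
  out x hx := by
    rw [Subalgebra.mem_center_iff] at hx
    obtain ⟨b, rfl⟩ := exists_eq_tmul_one_of_forall_commute fun c => hx (1 ⊗ₜ c)
    have hb : b ∈ Subalgebra.center S B := by
      rw [Subalgebra.mem_center_iff]
      intro b'
      have hcomm := hx (b' ⊗ₜ 1)
      simp only [Algebra.TensorProduct.tmul_mul_tmul, mul_one] at hcomm
      exact Algebra.TensorProduct.includeLeft_injective (R := k) (S := k)
        (FaithfulSMul.algebraMap_injective k C) hcomm
    obtain ⟨s, rfl⟩ := (Algebra.IsCentral.mem_center_iff S).1 hb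
    exact Algebra.mem_bot.2 ⟨s, rfl⟩

end TensorProduct

/-- The `K`-algebra `A` has a module of dimension `d` over the field `K`. The module is encoded as
a representation on the standard space `Fin d → K`, which avoids a choice of universe. -/
def HasModuleOfFinrank (K A : Type*) [Field K] [Ring A] [Algebra K A] (d : ℕ) : Prop :=
  Nonempty (A →ₐ[K] Module.End K (Fin d → K))

namespace HasModuleOfFinrank

variable {K A : Type*} [Field K] [Ring A] [Algebra K A]

theorem of_algHom {V : Type*} [AddCommGroup V] [Module K V] [Module.Finite K V]
    (φ : A →ₐ[K] Module.End K V) : HasModuleOfFinrank K A (Module.finrank K V) :=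
  ⟨((Module.finBasis K V).equivFun.conjAlgEquiv K).toAlgHom.comp φ⟩

theorem of_module (V : Type*) [AddCommGroup V] [Module K V] [Module.Finite K V] [Module A V]
    [IsScalarTower K A V] : HasModuleOfFinrank K A (Module.finrank K V) :=
  of_algHom (Algebra.lsmul K K V)

theorem exists_module {K : Type u} {A : Type*} [Field K] [Ring A] [Algebra K A] {d : ℕ}
    (h : HasModuleOfFinrank K A d) :
    ∃ (V : Type u) (_ : AddCommGroup V) (_ : Module K V) (_ : Module A V),
      IsScalarTower K A V ∧ Module.Finite K V ∧ Module.finrank K V = d := by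
  obtain ⟨φ⟩ := h
  let : Module A (Fin d → K) := Module.compHom _ φ.toRingHom
  have : IsScalarTower K A (Fin d → K) := .of_algebraMap_smul fun c v => by
    change φ (algebraMap K A c) v = c • v
    rw [AlgHom.commutes, Module.algebraMap_end_apply]
  exact ⟨Fin d → K, inferInstance, inferInstance, inferInstance, this, inferInstance,
    Module.finrank_fin_fun K⟩

theorem comap {B : Type*} [Ring B] [Algebra K B] {d : ℕ} (h : HasModuleOfFinrank K A d)
    (f : B →ₐ[K] A) : HasModuleOfFinrank K B d :=
  h.map fun φ => φ.comp f

theorem finrank_dvd {Δ : Type*} [DivisionRing Δ] [Algebra K Δ] {d : ℕ}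
    (h : HasModuleOfFinrank K Δ d) : Module.finrank K Δ ∣ d := by
  obtain ⟨V, _, _, _, _, _, rfl⟩ := h.exists_module
  exact ⟨_, (Module.finrank_mul_finrank K Δ V).symm⟩

variable {ι : Type*} [Fintype ι] [DecidableEq ι]

open scoped Matrix.Module

theorem matrix {e : ℕ} (h : HasModuleOfFinrank K A e) :
    HasModuleOfFinrank K (Matrix ι ι A) (Fintype.card ι * e) := by
  obtain ⟨V, _, _, _, _, _, rfl⟩ := h.exists_module
  have := of_module (K := K) (A := Matrix ι ι A) (ι → V)
  rwa [Module.finrank_pi_fintype, Finset.sum_const, smul_eq_mul, Finset.card_univ] at this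

theorem exists_of_matrix [Nonempty ι] {d : ℕ} (h : HasModuleOfFinrank K (Matrix ι ι A) d) :
    ∃ e, HasModuleOfFinrank K A e ∧ d = Fintype.card ι * e := by
  obtain ⟨V, _, _, _, _, _, rfl⟩ := h.exists_module
  let i : ι := Classical.arbitrary ι
  let : Module A V := Module.compHom V (Matrix.scalar (α := A) ι)
  have : IsScalarTower A (Matrix ι ι A) V :=
    MatrixModCat.isScalarTower_toModuleCat A (.of (Matrix ι ι A) V)
  have : IsScalarTower K A V := .of_algebraMap_smul fun c v => by
    rw [← algebraMap_smul (Matrix ι ι A) c v]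
    rfl
  let W := MatrixModCat.toModuleCatObj A V i
  have e : V ≃ₗ[K] (ι → W) :=
    (toModuleCatFromModuleCatLinearEquiv A (.of (Matrix ι ι A) V) i).restrictScalars K
  have : Module.Finite K W := .of_injective (W.subtype.restrictScalars K) W.subtype_injective
  refine ⟨Module.finrank K W, of_module W, ?_⟩
  rw [e.finrank_eq, Module.finrank_pi_fintype, Finset.sum_const, smul_eq_mul, Finset.card_univ]

end HasModuleOfFinrank

/-- Brauer equivalence of the `K`-algebras `A` and `B`: some matrix algebras over them are
isomorphic. It is the relation `IsBrauerEquivalent` for algebras that are not bundled as `CSA K`. -/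
def IsMatrixEquivalent (K A B : Type*) [CommRing K] [Ring A] [Algebra K A] [Ring B] [Algebra K B] :
    Prop :=
  ∃ m l : ℕ, 0 < m ∧ 0 < l ∧ Nonempty (Matrix (Fin m) (Fin m) A ≃ₐ[K] Matrix (Fin l) (Fin l) B)

section BrauerEquivalence

variable {K : Type*}

theorem isCentral_of_isCentral_matrix [CommRing K] {ι R : Type*} [Fintype ι] [DecidableEq ι]
    [Nonempty ι] [Ring R] [Algebra K R] [Algebra.IsCentral K (Matrix ι ι R)] :
    Algebra.IsCentral K R where
  out := by
    have hinj : Function.Injective (Matrix.scalarAlgHom ι K (α := R)) :=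
      fun _ _ => Matrix.scalar_inj.1
    refine (Subalgebra.map_injective hinj ?_).le
    rw [← Matrix.subalgebraCenter_eq_scalarAlgHom_map, Algebra.IsCentral.center_eq_bot,
      Algebra.map_bot]

theorem isMatrixEquivalent_matrix_of_algEquiv [CommRing K] {A R : Type*} [Ring A] [Algebra K A]
    [Ring R] [Algebra K R] {r t : ℕ} (hr : 0 < r) (ht : 0 < t)
    (e : A ≃ₐ[K] Matrix (Fin r) (Fin r) R) :
    IsMatrixEquivalent K A (Matrix (Fin t) (Fin t) R) :=
  ⟨t, r, ht, hr, ⟨e.mapMatrix.trans <| (Matrix.compAlgEquiv _ _ _ _).trans <|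
    (Matrix.reindexAlgEquiv K R (Equiv.prodComm _ _)).trans (Matrix.compAlgEquiv _ _ _ _).symm⟩⟩

/- With `A ≅ M_r(Δ)` and `δ = [Δ : K]`, every `A`-module has dimension `r * δ * t` for some `t`;
the condition on the dimensions then reads `N = t ^ 2 * δ = [M_t(Δ) : K]`. -/
theorem HasModuleOfFinrank.exists_isMatrixEquivalent [Field K] {A : Type u} [Ring A] [Algebra K A]
    [Module.Finite K A] [IsSimpleRing A] [Algebra.IsCentral K A] {d N : ℕ}
    (h : HasModuleOfFinrank K A d) (hd : 0 < d) (hN : d ^ 2 = Module.finrank K A * N) :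
    ∃ (B : Type u) (_ : Ring B) (_ : Algebra K B), Algebra.IsCentral K B ∧ IsSimpleRing B ∧
      Module.finrank K B = N ∧ IsMatrixEquivalent K A B := by
  have : IsArtinianRing A := .of_finite K A
  obtain ⟨r, _, Δ, _, _, _, ⟨φ⟩⟩ := IsSimpleRing.exists_algEquiv_matrix_divisionRing_finite K A
  obtain ⟨e, he, hde⟩ := (h.comap φ.symm.toAlgHom).exists_of_matrix
  obtain ⟨t, rfl⟩ := he.finrank_dvd
  have ht : 0 < t := Nat.pos_of_ne_zero (by rintro rfl; simp_all)
  have : NeZero t := ⟨ht.ne'⟩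
  have : Algebra.IsCentral K (Matrix (Fin r) (Fin r) Δ) := .of_algEquiv K A _ φ
  have : Algebra.IsCentral K Δ := isCentral_of_isCentral_matrix (ι := Fin r)
  have hA : Module.finrank K A = r * r * Module.finrank K Δ := by
    simp [φ.toLinearEquiv.finrank_eq, Module.finrank_matrix]
  refine ⟨Matrix (Fin t) (Fin t) Δ, inferInstance, inferInstance, inferInstance, inferInstance, ?_,
    isMatrixEquivalent_matrix_of_algEquiv (Nat.pos_of_neZero r) ht φ⟩
  rw [Module.finrank_matrix, Fintype.card_fin]
  refine Nat.eq_of_mul_eq_mul_left (Module.finrank_pos (R := K) (M := A)) ?_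
  rw [← hN, hde, hA, Fintype.card_fin]
  ring

theorem HasModuleOfFinrank.of_isMatrixEquivalent [Field K] {A B : Type*} [Ring A] [Algebra K A]
    [Ring B] [Algebra K B] [Module.Finite K B] {d : ℕ} (h : IsMatrixEquivalent K A B)
    (hd : d ^ 2 = Module.finrank K A * Module.finrank K B) : HasModuleOfFinrank K A d := by
  obtain ⟨m, l, hm, -, ⟨φ⟩⟩ := h
  have : NeZero m := ⟨hm.ne'⟩
  have hB : HasModuleOfFinrank K (Matrix (Fin l) (Fin l) B) (l * Module.finrank K B) := by
    simpa using (of_module (A := B) B).matrix (ι := Fin l)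
  obtain ⟨e, he, hme⟩ := (hB.comap φ.toAlgHom).exists_of_matrix
  rw [Fintype.card_fin] at hme
  have hdim : m * m * Module.finrank K A = l * l * Module.finrank K B := by
    simpa [Module.finrank_matrix] using φ.toLinearEquiv.finrank_eq
  suffices d = e by rwa [this]
  have hsq : (m * d) ^ 2 = (m * e) ^ 2 := by
    calc (m * d) ^ 2 = m * m * Module.finrank K A * Module.finrank K B := by
          rw [mul_pow, hd]; ring
      _ = (m * e) ^ 2 := by rw [hdim, ← hme]; ring
  exact Nat.eq_of_mul_eq_mul_left hm (Nat.pow_left_injective two_ne_zero hsq)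

end BrauerEquivalence

section SimpleRing

variable {A : Type*} [Ring A] [IsSimpleRing A]

theorem isIsotypicOfType_of_isSimpleRing [IsArtinianRing A] (V : Type*) [AddCommGroup V]
    [Module A V] (I : Ideal A) [IsSimpleModule A I] : IsIsotypicOfType A V I := fun W _ => by
  have : IsSemisimpleRing A := IsSimpleRing.isSemisimpleRing_iff_isArtinianRing.2 inferInstance
  obtain ⟨J, ⟨e⟩⟩ := IsSemisimpleRing.exists_linearEquiv_ideal_of_isSimpleModule A W
  have : IsSimpleModule A J := .congr e.symm
  exact ⟨e.trans (IsSimpleRing.isIsotypic A A I J).some⟩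

theorem nonempty_linearEquiv_of_finrank_eq {k : Type*} [Field k] [Algebra k A] [Module.Finite k A]
    {V W : Type*} [AddCommGroup V] [Module k V] [Module.Finite k V] [Module A V]
    [IsScalarTower k A V] [AddCommGroup W] [Module k W] [Module.Finite k W] [Module A W]
    [IsScalarTower k A W] (h : Module.finrank k V = Module.finrank k W) :
    Nonempty (V ≃ₗ[A] W) := by
  have : IsArtinianRing A := .of_finite k A
  have : IsSemisimpleRing A := IsSimpleRing.isSemisimpleRing_iff_isArtinianRing.2 inferInstance
  have : Module.Finite A V := .of_restrictScalars_finite k A V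
  have : Module.Finite A W := .of_restrictScalars_finite k A W
  obtain ⟨I, hI⟩ := IsAtomic.exists_atom (Ideal A)
  have : IsSimpleModule A I := isSimpleModule_iff_isAtom.2 hI
  obtain ⟨p, ⟨e⟩⟩ := (isIsotypicOfType_of_isSimpleRing V I).linearEquiv_fun
  obtain ⟨q, ⟨e'⟩⟩ := (isIsotypicOfType_of_isSimpleRing W I).linearEquiv_fun
  have hp := (e.restrictScalars k).finrank_eq
  have hq := (e'.restrictScalars k).finrank_eq
  have : Nontrivial I := IsSimpleModule.nontrivial A I
  have : Module.Finite k I := .of_injective (I.subtype.restrictScalars k) I.subtype_injective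
  have hpos : 0 < Module.finrank k I := Module.finrank_pos
  rw [h, hq, Module.finrank_pi_fintype, Module.finrank_pi_fintype] at hp
  simp only [Finset.sum_const, Finset.card_univ, Fintype.card_fin, smul_eq_mul] at hp
  obtain rfl := Nat.eq_of_mul_eq_mul_right hpos hp
  exact ⟨e.trans e'.symm⟩

theorem nonempty_algHom_mulOpposite_of_finrank_eq {k : Type*} [Field k] [Algebra k A]
    [Module.Finite k A] {C V : Type*} [Ring C] [Algebra k C] [AddCommGroup V] [Module k V]
    [Module.Finite k V] [Module A V] [IsScalarTower k A V] [Module C V] [IsScalarTower k C V]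
    [SMulCommClass A C V] (h : Module.finrank k V = Module.finrank k A) :
    Nonempty (C →ₐ[k] Aᵐᵒᵖ) := by
  obtain ⟨e⟩ := nonempty_linearEquiv_of_finrank_eq (A := A) h
  have : SMulCommClass C A V := .symm A C V
  let toEndSelf := (e.conjAlgEquiv k).toAlgHom.comp (Algebra.lsmul k A V : C →ₐ[k] _)
  exact ⟨(AlgEquiv.moduleEndSelf k).symm.toAlgHom.comp toEndSelf⟩

end SimpleRing

section Embedding

variable {F K : Type*}

theorem nonempty_baseChange_tensorProduct_algHom_iff {E C R : Type*} [CommRing F] [CommRing K]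
    [Algebra F K] [Ring E] [Algebra F E] [Ring C] [Algebra K C] [Ring R] [Algebra K R]
    [Algebra F R] [IsScalarTower F K R] :
    Nonempty ((K ⊗[F] E) ⊗[K] C →ₐ[K] R) ↔
      ∃ (φ : E →ₐ[F] R) (ψ : C →ₐ[K] R), ∀ e c, Commute (φ e) (ψ c) := by
  constructor
  · rintro ⟨χ⟩
    refine ⟨((χ.comp Algebra.TensorProduct.includeLeft).restrictScalars F).comp
      Algebra.TensorProduct.includeRight, χ.comp Algebra.TensorProduct.includeRight, fun e c => ?_⟩
    have hcomm : Commute (((1 : K) ⊗ₜ[F] e) ⊗ₜ[K] (1 : C)) (1 ⊗ₜ[K] c) := by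
      simp [commute_iff_eq]
    exact hcomm.map χ
  · rintro ⟨φ, ψ, h⟩
    let φK : K ⊗[F] E →ₐ[K] R := Algebra.TensorProduct.lift (Algebra.ofId K R) φ
      fun a e => Algebra.commute_algebraMap_left a (φ e)
    refine ⟨Algebra.TensorProduct.lift φK ψ fun x c => ?_⟩
    induction x with
    | zero => simp
    | tmul a e =>
      rw [show φK (a ⊗ₜ e) = algebraMap K R a * φ e from Algebra.TensorProduct.lift_tmul ..]
      exact (Algebra.commute_algebraMap_left a _).mul_left (h e c)
    | add x y hx hy => simpa using hx.add_left hy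

variable [Field F] [Field K] [Algebra F K] {D : Type*} [Ring D] [Algebra K D] [Algebra F D]
  [IsScalarTower F K D] {E : Type*} [Ring E] [Algebra F E]

theorem hasModuleOfFinrank_of_algHom [Module.Finite F K] [Module.Finite F E] {d : ℕ}
    (hd : Module.finrank F K * d = Module.finrank F E) (f : D →ₐ[F] E) :
    HasModuleOfFinrank K ((K ⊗[F] E) ⊗[K] Dᵐᵒᵖ) d := by
  let : Module Dᵐᵒᵖ E := Module.compHom E f.toRingHom.op
  let : Module K E := Module.compHom E (algebraMap K Dᵐᵒᵖ)
  have : IsScalarTower K Dᵐᵒᵖ E := .of_algebraMap_smul fun _ _ => rfl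
  have : IsScalarTower F K E := .of_algebraMap_smul fun a x => by
    change x * f (algebraMap K D (algebraMap F K a)) = a • x
    rw [← IsScalarTower.algebraMap_apply, AlgHom.commutes, Algebra.smul_def, Algebra.commutes]
  have : SMulCommClass E Dᵐᵒᵖ E := ⟨fun e c x => (mul_assoc e x (f c.unop)).symm⟩
  have : SMulCommClass E K E := ⟨fun e a x => smul_comm e (algebraMap K Dᵐᵒᵖ a) x⟩
  have : Module.Finite K E := .of_restrictScalars_finite F K E
  let φ : E →ₐ[F] Module.End K E := Algebra.lsmul F K E
  let ψ : Dᵐᵒᵖ →ₐ[K] Module.End K E := Algebra.lsmul K K E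
  have hcomm (e : E) (c : Dᵐᵒᵖ) : Commute (φ e) (ψ c) := LinearMap.ext fun x => smul_comm e c x
  obtain ⟨χ⟩ := nonempty_baseChange_tensorProduct_algHom_iff.2 ⟨φ, ψ, hcomm⟩
  rw [← Module.finrank_mul_finrank F K E] at hd
  rw [Nat.eq_of_mul_eq_mul_left Module.finrank_pos hd]
  exact .of_algHom χ

theorem nonempty_algHom_of_hasModuleOfFinrank [IsSimpleRing E] [Module.Finite F E]
    [Module.Finite F K] {d : ℕ} (hd : Module.finrank F K * d = Module.finrank F E)
    (h : HasModuleOfFinrank K ((K ⊗[F] E) ⊗[K] Dᵐᵒᵖ) d) : Nonempty (D →ₐ[F] E) := by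
  obtain ⟨φ, ψ, hcomm⟩ := nonempty_baseChange_tensorProduct_algHom_iff.1 h
  let V := Fin d → K
  let : Module E V := Module.compHom V φ.toRingHom
  let : Module Dᵐᵒᵖ V := Module.compHom V ψ.toRingHom
  have : IsScalarTower F E V := .of_algebraMap_smul fun c v => by
    change φ (algebraMap F E c) v = c • v
    rw [AlgHom.commutes, Module.algebraMap_end_apply]
  have : IsScalarTower F Dᵐᵒᵖ V := .of_algebraMap_smul fun c v => by
    change ψ (algebraMap F Dᵐᵒᵖ c) v = c • v
    rw [IsScalarTower.algebraMap_apply F K Dᵐᵒᵖ, AlgHom.commutes, Module.algebraMap_end_apply,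
      algebraMap_smul]
  have : SMulCommClass E Dᵐᵒᵖ V := ⟨fun e c v => LinearMap.congr_fun (hcomm e c) v⟩
  have hV : Module.finrank F V = Module.finrank F E := by
    rw [← hd, ← Module.finrank_mul_finrank F K V, Module.finrank_fin_fun]
  exact (nonempty_algHom_mulOpposite_of_finrank_eq (A := E) hV).map AlgHom.unop

end Embedding

theorem embeds_iff_brauer_equivalent_degree_n_general {F : Type*} {K D E : Type u} [Field F]
    [Field K] [Algebra F K] [Module.Finite F K] [Ring D] [IsSimpleRing D] [Algebra K D]
    [Module.Finite K D] [Algebra.IsCentral K D] [Algebra F D] [IsScalarTower F K D] [Ring E]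
    [IsSimpleRing E] [Algebra F E] [Module.Finite F E] [Algebra.IsCentral F E] {n : ℕ}
    (hE : Module.finrank F E = n ^ 2 * Module.finrank K D * Module.finrank F K ^ 2) :
    (∃ f : D →ₐ[F] E, Function.Injective f) ↔
      ∃ (B : Type u) (_ : Ring B) (_ : Algebra K B), Algebra.IsCentral K B ∧ IsSimpleRing B ∧
        Module.finrank K B = n ^ 2 ∧ IsMatrixEquivalent K ((K ⊗[F] E) ⊗[K] Dᵐᵒᵖ) B := by
  let d := n ^ 2 * Module.finrank K D * Module.finrank F K
  have hd : Module.finrank F K * d = Module.finrank F E := by rw [hE]; ring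
  have hpos : 0 < Module.finrank F K * d := hd ▸ Module.finrank_pos
  have hsq : d ^ 2 = Module.finrank K ((K ⊗[F] E) ⊗[K] Dᵐᵒᵖ) * n ^ 2 := by
    rw [Module.finrank_tensorProduct, Module.finrank_baseChange,
      ← (MulOpposite.opLinearEquiv K).finrank_eq, hE]
    ring
  constructor
  · rintro ⟨f, -⟩
    have : IsSimpleRing (K ⊗[F] E) := isSimpleRing_tensorProduct
    have : Algebra.IsCentral K (K ⊗[F] E) := isCentral_tensorProduct
    have : IsSimpleRing ((K ⊗[F] E) ⊗[K] Dᵐᵒᵖ) := isSimpleRing_tensorProduct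
    have : Algebra.IsCentral K ((K ⊗[F] E) ⊗[K] Dᵐᵒᵖ) := isCentral_tensorProduct
    exact (hasModuleOfFinrank_of_algHom hd f).exists_isMatrixEquivalent
      (Nat.pos_of_mul_pos_left hpos) hsq
  · rintro ⟨B, _, _, -, -, hB, hAB⟩
    have hn : 0 < n ^ 2 := Nat.pos_of_ne_zero fun h => by simp [d, h] at hpos
    have : Module.Finite K B := Module.finite_of_finrank_pos (hB ▸ hn)
    obtain ⟨f⟩ := nonempty_algHom_of_hasModuleOfFinrank hd (.of_isMatrixEquivalent hAB (hB ▸ hsq))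
    exact ⟨f, RingHom.injective f.toRingHom⟩

/-- Embedding criterion.  Let `K/F` be a finite field extension of degree `b`, `D` a
division ring with center `K` of degree `a`, regarded as an `F`-algebra via
`F ⊆ K ⊆ D`, and `E` a division ring with center `F` of degree `N = n·a·b`.  Then `D`
embeds into `E` as an `F`-algebra if and only if the central simple `K`-algebra
`(E ⊗_F K) ⊗_K Dᵒᵖ` (realized as `(K ⊗[F] E) ⊗[K] Dᵐᵒᵖ`) is Brauer-equivalent over `K`
to some central simple `K`-algebra of degree `n`. -/
theorem embeds_iff_brauer_equivalent_degree_n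
    (F K : Type) [Field F] [Field K] [Algebra F K] [FiniteDimensional F K]
    (a b n : ℕ) (hn : 0 < n) (hb : Module.finrank F K = b)
    (D : Type) [DivisionRing D] [Algebra K D] [FiniteDimensional K D]
    (hDcenter : Subalgebra.center K D = ⊥) (ha : Module.finrank K D = a ^ 2)
    [Algebra F D] [IsScalarTower F K D]
    (E : Type) [DivisionRing E] [Algebra F E] [FiniteDimensional F E]
    (hEcenter : Subalgebra.center F E = ⊥)
    (hE : Module.finrank F E = (n * a * b) ^ 2) :
    (∃ f : D →ₐ[F] E, Function.Injective f) ↔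
      ∃ B : BundledAlgebra K, Algebra.IsCentral K B.carrier ∧ IsSimpleRing B.carrier ∧
        Module.finrank K B.carrier = n ^ 2 ∧
        ∃ m l : ℕ, 0 < m ∧ 0 < l ∧
          Nonempty (Matrix (Fin m) (Fin m) ((K ⊗[F] E) ⊗[K] Dᵐᵒᵖ) ≃ₐ[K]
            Matrix (Fin l) (Fin l) B.carrier) := by
  have : Algebra.IsCentral K D := ⟨hDcenter.le⟩
  have : Algebra.IsCentral F E := ⟨hEcenter.le⟩
  rw [embeds_iff_brauer_equivalent_degree_n_general (by rw [hE, ha, hb]; ring)]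
  exact ⟨fun ⟨B, _, _, h⟩ => ⟨⟨B⟩, h⟩, fun ⟨B, h⟩ => ⟨B.carrier, _, _, h⟩⟩
end

section
/- (Theorem: exactness of the index.) Let F be a field, K/F a finite field extension of degree b, D a division ring with center K of degree a (dim_K D = a²), and E a division ring with center F of degree N = nab (dim_F E = N²) for some positive integer n. If the central simple K-algebra (E ⊗_F K) ⊗_K Dᵒᵖ is Brauer-equivalent over K to some central simple K-algebra of degree n, then it is Brauer-equivalent over K to a central division K-algebra of degree exactly n. (That is, if the Schur index of (E ⊗_F K) ⊗_K Dᵒᵖ divides n, then it equals n.) -/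
open scoped TensorProduct

/-- A bundled division algebra over a field `K`. -/
structure BundledDivisionAlgebra (K : Type) [Field K] : Type 1 where
  carrier : Type
  [divisionRing : DivisionRing carrier]
  [algebra : Algebra K carrier]

attribute [instance] BundledDivisionAlgebra.divisionRing
attribute [instance] BundledDivisionAlgebra.algebra

/-!
Let `d` be the Schur index of `A = (K ⊗[F] E) ⊗[K] Dᵐᵒᵖ`, so that `A` is the algebra of `r × r`
matrices over a division algebra `Δ` with `[Δ : K] = d ^ 2`. A Brauer equivalent algebra of
degree `n` forces `d ∣ n`. Conversely `E` embeds in `A`, so the space of columns of length `r` over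
`Δ` is a vector space over `E`, and comparing dimensions over `F` shows that
`[E : F] = (n * a * b) ^ 2` divides `b * r * d ^ 2`. Since `r * d = deg A = n * a ^ 2 * b`, this
means that `n ∣ d`.
-/

open Module

section FinrankDivisibility

theorem finrank_fun_eq_card_mul (R ι M : Type*) [Semiring R] [StrongRankCondition R] [Fintype ι]
    [AddCommMonoid M] [Module R M] [Module.Free R M] :
    finrank R (ι → M) = Fintype.card ι * finrank R M := by
  simp [finrank]

variable {K ι κ Δ V R : Type*} [Field K] [Fintype ι] [DecidableEq ι] [Nonempty ι] [Fintype κ]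
  [DecidableEq κ] [DivisionRing Δ] [Algebra K Δ] [AddCommGroup V] [Module K V] [Ring R]
  [Algebra K R]

variable (K ι Δ V) in
theorem card_mul_finrank_dvd_finrank_of_matrix_module [Module (Matrix ι ι Δ) V]
    [IsScalarTower K (Matrix ι ι Δ) V] : Fintype.card ι * finrank K Δ ∣ finrank K V := by
  let i : ι := Classical.arbitrary ι
  let _ : Module Δ V := .compHom V (Matrix.scalar (α := Δ) ι)
  have : IsScalarTower Δ (Matrix ι ι Δ) V :=
    MatrixModCat.isScalarTower_toModuleCat Δ (ModuleCat.of (Matrix ι ι Δ) V)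
  have : IsScalarTower K Δ V := .of_algebraMap_smul fun c v ↦ algebraMap_smul (Matrix ι ι Δ) c v
  let W : Submodule Δ V := MatrixModCat.toModuleCatObj Δ V i
  -- Morita theory: `V` is the space of column vectors over `W = Eᵢᵢ V`.
  open scoped Matrix.Module in
  let e : V ≃ₗ[Matrix ι ι Δ] ι → W :=
    toModuleCatFromModuleCatLinearEquiv Δ (ModuleCat.of (Matrix ι ι Δ) V) i
  open scoped Matrix.Module in
  have hV : finrank K V = Fintype.card ι * (finrank K Δ * finrank Δ W) := by
    rw [((e.restrictScalars Δ).restrictScalars K).finrank_eq, finrank_fun_eq_card_mul,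
      finrank_mul_finrank]
  exact ⟨finrank Δ W, by rw [hV, mul_assoc]⟩

open scoped Matrix.Module in
theorem card_mul_finrank_dvd_of_algHom_matrix (φ : Matrix ι ι Δ →ₐ[K] Matrix κ κ R) :
    Fintype.card ι * finrank K Δ ∣ Fintype.card κ * finrank K R := by
  let _ : Module (Matrix ι ι Δ) (κ → R) := .compHom (κ → R) φ.toRingHom
  have : IsScalarTower K (Matrix ι ι Δ) (κ → R) := .of_algebraMap_smul fun c v ↦ by
    change φ (algebraMap K _ c) • v = c • v
    rw [φ.commutes, algebraMap_smul]
  rw [← finrank_fun_eq_card_mul K κ R]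
  exact card_mul_finrank_dvd_finrank_of_matrix_module K ι Δ (κ → R)

theorem finrank_dvd_of_algHom_matrix (φ : Δ →ₐ[K] Matrix κ κ R) :
    finrank K Δ ∣ Fintype.card κ * finrank K R := by
  simpa using card_mul_finrank_dvd_of_algHom_matrix
    (φ.comp (Matrix.uniqueAlgEquiv (m := Unit)).toAlgHom)

theorem exists_dvd_and_finrank_eq_sq_of_matrix_algEquiv [FiniteDimensional K Δ] {n : ℕ}
    (φ : Matrix ι ι Δ ≃ₐ[K] Matrix κ κ R) (hR : finrank K R = n ^ 2) :
    ∃ d, d ∣ n ∧ finrank K Δ = d ^ 2 := by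
  obtain ⟨k, hk⟩ := card_mul_finrank_dvd_of_algHom_matrix φ.toAlgHom
  rw [hR] at hk
  have hdim : Fintype.card ι * Fintype.card ι * finrank K Δ =
      Fintype.card κ * Fintype.card κ * n ^ 2 := by
    rw [← hR, ← finrank_matrix, ← finrank_matrix, φ.toLinearEquiv.finrank_eq]
  have hpos : 0 < Fintype.card ι * Fintype.card ι * finrank K Δ := by
    have := Fintype.card_pos (α := ι)
    have := finrank_pos (R := K) (M := Δ)
    positivity
  have hn : n ^ 2 = finrank K Δ * k ^ 2 := by
    refine Nat.eq_of_mul_eq_mul_left hpos ?_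
    calc Fintype.card ι * Fintype.card ι * finrank K Δ * n ^ 2
        = (Fintype.card κ * n ^ 2) ^ 2 := by rw [hdim]; ring
      _ = _ := by rw [hk]; ring
  obtain ⟨d, rfl⟩ : k ∣ n := (Nat.pow_dvd_pow_iff two_ne_zero).mp (hn ▸ dvd_mul_left ..)
  have hk0 : k ≠ 0 := by
    rintro rfl
    simp [hdim] at hpos
  refine ⟨d, dvd_mul_left d k, Nat.eq_of_mul_eq_mul_right (by positivity : 0 < k ^ 2) ?_⟩
  rw [← hn, mul_pow, mul_comm]

theorem dvd_of_algHom_matrix {F E : Type*} [Field F] [Algebra F K] [Algebra F R]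
    [IsScalarTower F K R] [DivisionRing E] [Algebra F E] [FiniteDimensional F E]
    (φ : E →ₐ[F] Matrix κ κ R) {n d : ℕ} (hR : finrank K R = d ^ 2)
    (hE : finrank F E = n * finrank F K * (Fintype.card κ * d)) : n ∣ d := by
  have hdvd : finrank F K * (Fintype.card κ * d) * n ∣ finrank F K * (Fintype.card κ * d) * d := by
    have h := finrank_dvd_of_algHom_matrix φ
    rw [hE, ← finrank_mul_finrank F K R, hR] at h
    convert h using 1 <;> ring
  have hpos : 0 < finrank F K * (Fintype.card κ * d) := by
    refine Nat.pos_of_ne_zero fun h ↦ (finrank_pos (R := F) (M := E)).ne' ?_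
    rw [hE, mul_assoc, h, mul_zero]
  exact Nat.dvd_of_mul_dvd_mul_left hpos hdvd

end FinrankDivisibility

section Matrix

/-- Block matrices as matrices: the isomorphism `M_m(M_r(R)) ≅ M_{mr}(R)`, used to compose Brauer
equivalences, which are formulated with matrices indexed by `Fin`. -/
def matrixMatrixFinAlgEquiv (K R : Type*) [CommSemiring K] [Semiring R] [Algebra K R] (m r : ℕ) :
    Matrix (Fin m) (Fin m) (Matrix (Fin r) (Fin r) R) ≃ₐ[K]
      Matrix (Fin (m * r)) (Fin (m * r)) R :=
  (Matrix.compAlgEquiv _ _ R K).trans (Matrix.reindexAlgEquiv K R finProdFinEquiv)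

variable {ι : Type*} [Fintype ι] [Nonempty ι]

theorem isSimpleRing_of_matrix {R : Type*} [Ring R] [IsSimpleRing (Matrix ι ι R)] :
    IsSimpleRing R := by
  classical exact ⟨(TwoSidedIdeal.orderIsoMatrix (n := ι)).isSimpleOrder⟩

theorem isCentral_of_matrix_algEquiv {K A C : Type*} [Field K] [Ring A] [Algebra K A] [Ring C]
    [Algebra K C] [Algebra.IsCentral K C] [DecidableEq ι] (φ : Matrix ι ι A ≃ₐ[K] C) :
    Algebra.IsCentral K A := by
  refine ⟨fun c hc ↦ ?_⟩
  have hscalar : Matrix.scalar ι c ∈ Subalgebra.center K (Matrix ι ι A) := by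
    rw [Matrix.subalgebraCenter_eq_scalarAlgHom_map]
    exact ⟨c, hc, rfl⟩
  have hφ : φ (Matrix.scalar ι c) ∈ Subalgebra.center K C :=
    (MulEquivClass.apply_mem_center_iff φ).mpr hscalar
  rw [Algebra.IsCentral.center_eq_bot K C] at hφ
  obtain ⟨k, hk⟩ := hφ
  have hk : algebraMap K (Matrix ι ι A) k = Matrix.scalar ι c := φ.injective <| by
    rw [φ.commutes]; exact hk
  let i : ι := Classical.arbitrary ι
  exact ⟨k, by simpa [Matrix.algebraMap_matrix_apply] using congr_fun₂ hk i i⟩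

end Matrix

/-- Brauer equivalence of `K`-algebras. Unlike `IsBrauerEquivalent`, it is stated for unbundled
algebras, in arbitrary universes and not assumed to be central simple. -/
def IsBrauerSimilar (K A B : Type*) [Field K] [Ring A] [Algebra K A] [Ring B] [Algebra K B] :
    Prop :=
  ∃ m l : ℕ, 0 < m ∧ 0 < l ∧
    Nonempty (Matrix (Fin m) (Fin m) A ≃ₐ[K] Matrix (Fin l) (Fin l) B)

namespace IsBrauerSimilar

variable {K A B C : Type*} [Field K] [Ring A] [Algebra K A] [Ring B] [Algebra K B] [Ring C]
  [Algebra K C]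

theorem symm (h : IsBrauerSimilar K A B) : IsBrauerSimilar K B A := by
  obtain ⟨m, l, hm, hl, ⟨φ⟩⟩ := h
  exact ⟨l, m, hl, hm, ⟨φ.symm⟩⟩

theorem trans (hAB : IsBrauerSimilar K A B) (hBC : IsBrauerSimilar K B C) :
    IsBrauerSimilar K A C := by
  obtain ⟨m, l, hm, hl, ⟨φ⟩⟩ := hAB
  obtain ⟨p, q, hp, hq, ⟨ψ⟩⟩ := hBC
  let φ' : Matrix (Fin (p * m)) (Fin (p * m)) A ≃ₐ[K] Matrix (Fin (p * l)) (Fin (p * l)) B :=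
    ((matrixMatrixFinAlgEquiv K A p m).symm.trans φ.mapMatrix).trans
      (matrixMatrixFinAlgEquiv K B p l)
  let ψ' : Matrix (Fin (l * p)) (Fin (l * p)) B ≃ₐ[K] Matrix (Fin (l * q)) (Fin (l * q)) C :=
    ((matrixMatrixFinAlgEquiv K B l p).symm.trans ψ.mapMatrix).trans
      (matrixMatrixFinAlgEquiv K C l q)
  exact ⟨p * m, l * q, Nat.mul_pos hp hm, Nat.mul_pos hl hq,
    ⟨(φ'.trans (Matrix.reindexAlgEquiv K B (finCongr (mul_comm p l)))).trans ψ'⟩⟩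

theorem of_algEquiv_matrix {r : ℕ} (hr : 0 < r) (e : A ≃ₐ[K] Matrix (Fin r) (Fin r) B) :
    IsBrauerSimilar K A B :=
  ⟨1, 1 * r, one_pos, Nat.mul_pos one_pos hr,
    ⟨e.mapMatrix.trans (matrixMatrixFinAlgEquiv K B 1 r)⟩⟩

theorem isSimpleRing [IsSimpleRing B] (h : IsBrauerSimilar K A B) : IsSimpleRing A := by
  obtain ⟨m, l, hm, hl, ⟨φ⟩⟩ := h
  have : NeZero m := ⟨hm.ne'⟩
  have : NeZero l := ⟨hl.ne'⟩
  have : IsSimpleRing (Matrix (Fin m) (Fin m) A) := .of_ringEquiv φ.symm.toRingEquiv inferInstance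
  exact isSimpleRing_of_matrix (ι := Fin m)

theorem isCentral [Algebra.IsCentral K B] (h : IsBrauerSimilar K A B) : Algebra.IsCentral K A := by
  obtain ⟨m, l, hm, -, ⟨φ⟩⟩ := h
  have : NeZero m := ⟨hm.ne'⟩
  exact isCentral_of_matrix_algEquiv φ

theorem exists_dvd_and_finrank_eq_sq {Δ : Type*} [DivisionRing Δ] [Algebra K Δ]
    [FiniteDimensional K Δ] {n : ℕ} (h : IsBrauerSimilar K Δ B) (hB : finrank K B = n ^ 2) :
    ∃ d, d ∣ n ∧ finrank K Δ = d ^ 2 := by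
  obtain ⟨m, l, hm, -, ⟨φ⟩⟩ := h
  have : NeZero m := ⟨hm.ne'⟩
  exact exists_dvd_and_finrank_eq_sq_of_matrix_algEquiv φ hB

end IsBrauerSimilar

universe u

theorem exists_divisionRing_isBrauerSimilar_finrank_eq_sq {F K E B : Type*} {A : Type u}
    [Field F] [Field K] [Algebra F K] [DivisionRing E] [Algebra F E] [FiniteDimensional F E]
    [Ring A] [Algebra K A] [Algebra F A] [IsScalarTower F K A] [Ring B] [Algebra K B]
    [IsSimpleRing B]
    (ψ : E →ₐ[F] A) {n t : ℕ} (hE : finrank F E = n * finrank F K * t)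
    (hA : finrank K A = t ^ 2) (hB : finrank K B = n ^ 2) (hAB : IsBrauerSimilar K A B) :
    ∃ (Δ : Type u) (_ : DivisionRing Δ) (_ : Algebra K Δ),
      finrank K Δ = n ^ 2 ∧ IsBrauerSimilar K A Δ := by
  have ht : t ≠ 0 := by
    rintro rfl
    exact (finrank_pos (R := F) (M := E)).ne' hE
  have : FiniteDimensional K A := .of_finrank_pos (by rw [hA]; positivity)
  have : IsSimpleRing A := hAB.isSimpleRing
  have : IsArtinianRing A := .of_finite K A
  obtain ⟨r, hr, Δ, _, _, _, ⟨e⟩⟩ :=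
    IsSimpleRing.exists_algEquiv_matrix_divisionRing_finite K A
  have hrpos : 0 < r := Nat.pos_of_ne_zero hr.ne
  have hAΔ : IsBrauerSimilar K A Δ := .of_algEquiv_matrix hrpos e
  obtain ⟨d, hdn, hd⟩ := (hAΔ.symm.trans hAB).exists_dvd_and_finrank_eq_sq hB
  have hrd : t = r * d := Nat.pow_left_injective two_ne_zero <| by
    simp only [← hA, e.toLinearEquiv.finrank_eq, finrank_matrix, hd, Fintype.card_fin]
    ring
  let _ : Algebra F Δ := .compHom Δ (algebraMap F K)
  have : IsScalarTower F K Δ := .of_algebraMap_eq fun _ ↦ rfl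
  have hnd : n ∣ d :=
    dvd_of_algHom_matrix ((e.restrictScalars F).toAlgHom.comp ψ) hd (by simpa [← hrd])
  exact ⟨Δ, _, _, by rw [hd, hdn.antisymm hnd], hAΔ⟩

universe uK uD uE

theorem index_eq_n_of_index_dvd_n_general {F : Type*} {K : Type uK} {D : Type uD} {E : Type uE}
    [Field F] [Field K] [Algebra F K] [Ring D] [Algebra K D] [DivisionRing E] [Algebra F E]
    [FiniteDimensional F E] {B : Type*} [Ring B] [Algebra K B] [Algebra.IsCentral K B]
    [IsSimpleRing B] {a n : ℕ} (hD : finrank K D = a ^ 2)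
    (hE : finrank F E = (n * a * finrank F K) ^ 2) (hB : finrank K B = n ^ 2)
    (hsim : IsBrauerSimilar K ((K ⊗[F] E) ⊗[K] Dᵐᵒᵖ) B) :
    ∃ (Δ : Type (max uK uD uE)) (_ : DivisionRing Δ) (_ : Algebra K Δ), Algebra.IsCentral K Δ ∧
      finrank K Δ = n ^ 2 ∧ IsBrauerSimilar K ((K ⊗[F] E) ⊗[K] Dᵐᵒᵖ) Δ := by
  let ψ : E →ₐ[F] (K ⊗[F] E) ⊗[K] Dᵐᵒᵖ :=
    (Algebra.TensorProduct.includeLeft (R := K) (S := F)).comp Algebra.TensorProduct.includeRight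
  have hdim : finrank K ((K ⊗[F] E) ⊗[K] Dᵐᵒᵖ) = (n * a * finrank F K * a) ^ 2 := by
    rw [finrank_tensorProduct, finrank_baseChange, MulOpposite.finrank, hE, hD, ← mul_pow]
  obtain ⟨Δ, _, _, hΔ, hAΔ⟩ := exists_divisionRing_isBrauerSimilar_finrank_eq_sq ψ
    (by rw [hE]; ring) hdim hB hsim
  exact ⟨Δ, _, _, (hAΔ.symm.trans hsim).isCentral, hΔ, hAΔ⟩

/-- Exactness of the index.  With `K/F` finite of degree `b`, `D` a division ring with
center `K` of degree `a`, and `E` a division ring with center `F` of degree `N = n·a·b`: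
if the central simple `K`-algebra `(E ⊗_F K) ⊗_K Dᵒᵖ` (realized as
`(K ⊗[F] E) ⊗[K] Dᵐᵒᵖ`) is Brauer-equivalent over `K` to some central simple
`K`-algebra of degree `n`, then it is Brauer-equivalent over `K` to a central division
`K`-algebra of degree exactly `n`. -/
theorem index_eq_n_of_index_dvd_n
    (F K : Type) [Field F] [Field K] [Algebra F K] [FiniteDimensional F K]
    (a b n : ℕ) (hn : 0 < n) (hb : Module.finrank F K = b)
    (D : Type) [DivisionRing D] [Algebra K D] [FiniteDimensional K D]
    (hDcenter : Subalgebra.center K D = ⊥) (ha : Module.finrank K D = a ^ 2)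
    [Algebra F D] [IsScalarTower F K D]
    (E : Type) [DivisionRing E] [Algebra F E] [FiniteDimensional F E]
    (hEcenter : Subalgebra.center F E = ⊥)
    (hE : Module.finrank F E = (n * a * b) ^ 2)
    (hyp : ∃ B : BundledAlgebra K, Algebra.IsCentral K B.carrier ∧
      IsSimpleRing B.carrier ∧ Module.finrank K B.carrier = n ^ 2 ∧
      ∃ m l : ℕ, 0 < m ∧ 0 < l ∧
        Nonempty (Matrix (Fin m) (Fin m) ((K ⊗[F] E) ⊗[K] Dᵐᵒᵖ) ≃ₐ[K]
          Matrix (Fin l) (Fin l) B.carrier)) :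
    ∃ B : BundledDivisionAlgebra K, Subalgebra.center K B.carrier = ⊥ ∧
      Module.finrank K B.carrier = n ^ 2 ∧
      ∃ m l : ℕ, 0 < m ∧ 0 < l ∧
        Nonempty (Matrix (Fin m) (Fin m) ((K ⊗[F] E) ⊗[K] Dᵐᵒᵖ) ≃ₐ[K]
          Matrix (Fin l) (Fin l) B.carrier) := by
  obtain ⟨B, hBcentral, hBsimple, hB, hsim⟩ := hyp
  obtain ⟨Δ, _, _, hcentral, hΔ, hsimΔ⟩ :=
    index_eq_n_of_index_dvd_n_general (E := E) ha (hb ▸ hE) hB hsim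
  exact ⟨⟨Δ⟩, hcentral.center_eq_bot, hΔ, hsimΔ⟩
end
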